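/- For the alternating sum-of-divisors function β(n) = ∑_{d | n} d·(−1)^{Ω(n/d)}, one has ∑_{n ≤ x} β(⌊x/n⌋)/⌊x/n⌋ = x · ∑_{m ≥ 1} β(m)/(m²(m+1)) + O(x^{1/3} log x) as x → ∞. -/

import Mathlib

open Filter Finset

/-- The alternating sum-of-divisors function `β(n) = ∑_{d ∣ n} d · (−1)^{Ω(n/d)} = id ∗ λ`,
where `Ω` is the number of prime factors with multiplicity. -/
noncomputable def altSigma (n : ℕ) : ℝ :=
  ∑ d ∈ n.divisors, (d : ℝ) * (-1 : ℝ) ^ (ArithmeticFunction.cardFactors (n / d))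

/-!
Write `β(m)/m = ∑_{d ∣ m} λ(d)/d`, let `ψ(t) = {t} - 1/2`, and let `c = ∑_{d ≥ 1} λ(d)/d²` be the
mean value of `β(m)/m`. Group the `n > x/(M+1)` by the value `m = ⌊x/n⌋ ≤ M`: they contribute
`x ∑_{m ≤ M} β(m)/(m²(m+1))` and a sum of the `ψ(x/(m+1)) - ψ(x/m)` weighted by `β(m)/m`. For the
`n ≤ x/(M+1)`, detecting `d ∣ ⌊x/n⌋` by `1/d + ψ((x/n-1)/d) - ψ(x/(nd))` for `d ≤ x^{1/3}`
gives the main term `c x/(M+1)`; the `d > x^{1/3}` contribute little because `n ↦ ⌊x/n⌋` is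
injective for `n ≤ √x`. By partial summation the tail `m > M` of the series is also close to
`c/(M+1)`. All the sawtooth sums are hyperbolic, of the form `∑_{k ≤ K} ψ(y/(k+θ)+τ)`, and van der
Corput's second-derivative test bounds them by `O((1 + log K)(y^{1/3} + √(K³/y)))`. With
`M = x^{5/9}` every error term is `O(x^{1/3} log x)`.
-/

open scoped FourierTransform fwdDiff

/-! ### Exponential sums -/

theorem two_mul_le_sin_pi_mul {δ u : ℝ} (hδ : 0 ≤ δ) (h₁ : δ ≤ u) (h₂ : u ≤ 1 - δ) :
    2 * δ ≤ Real.sin (Real.pi * u) := by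
  have hπ := Real.pi_pos
  rcases le_total u (1 / 2) with hu | hu
  · have h := Real.mul_le_sin (x := Real.pi * u) (by nlinarith) (by nlinarith)
    rw [← mul_assoc, div_mul_cancel₀ _ hπ.ne'] at h
    linarith
  · have h := Real.mul_le_sin (x := Real.pi * (1 - u)) (by nlinarith) (by nlinarith)
    rw [← mul_assoc, div_mul_cancel₀ _ hπ.ne', mul_one_sub Real.pi,
      Real.sin_pi_sub] at h
    linarith

theorem cot_antitoneOn : AntitoneOn Real.cot (Set.Ioo 0 Real.pi) := by
  rintro a ⟨ha, ha'⟩ b ⟨hb, hb'⟩ hab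
  have hsub : 0 ≤ Real.sin (b - a) := Real.sin_nonneg_of_nonneg_of_le_pi (by linarith) (by linarith)
  rw [Real.sin_sub] at hsub
  rw [Real.cot_eq_cos_div_sin, Real.cot_eq_cos_div_sin,
    div_le_div_iff₀ (Real.sin_pos_of_pos_of_lt_pi hb hb') (Real.sin_pos_of_pos_of_lt_pi ha ha')]
  linarith

theorem norm_one_sub_fourierChar (u : ℝ) :
    ‖(1 : ℂ) - 𝐞 u‖ = 2 * |Real.sin (Real.pi * u)| := by
  rw [norm_sub_rev, Real.fourierChar_apply, mul_comm _ Complex.I,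
    Complex.norm_exp_I_mul_ofReal_sub_one, norm_mul, Real.norm_two, Real.norm_eq_abs,
    mul_assoc, mul_div_cancel_left₀ _ two_ne_zero]

theorem inv_one_sub_fourierChar {u : ℝ} (hu : Real.sin (Real.pi * u) ≠ 0) :
    ((1 : ℂ) - 𝐞 u)⁻¹ = (1 + Real.cot (Real.pi * u) * Complex.I) / 2 := by
  have hexp : (𝐞 u : ℂ)
      = Real.cos (2 * (Real.pi * u)) + Real.sin (2 * (Real.pi * u)) * Complex.I := by
    rw [Real.fourierChar_apply, Complex.exp_mul_I, Complex.ofReal_cos, Complex.ofReal_sin,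
      mul_assoc]
  have hpyth : (Real.sin (Real.pi * u) : ℂ) ^ 2 + (Real.cos (Real.pi * u) : ℂ) ^ 2 = 1 := by
    exact_mod_cast Real.sin_sq_add_cos_sq (Real.pi * u)
  have hu' : (Real.sin (Real.pi * u) : ℂ) ≠ 0 := by exact_mod_cast hu
  rw [hexp, Real.cos_two_mul, Real.sin_two_mul, Real.cot_eq_cos_div_sin]
  refine inv_eq_of_mul_eq_one_left ?_
  push_cast [-Complex.ofReal_cos, -Complex.ofReal_sin]
  generalize (Real.cos (Real.pi * u) : ℂ) = C at *
  generalize (Real.sin (Real.pi * u) : ℂ) = S at *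
  field_simp
  linear_combination (-2 * S * C ^ 2) * Complex.I_sq + (-2 * Complex.I * C) * hpyth

theorem norm_sum_fourierChar_le_card {ι : Type*} (S : Finset ι) (g : ι → ℝ) :
    ‖∑ k ∈ S, (𝐞 (g k) : ℂ)‖ ≤ #S := by
  refine (norm_sum_le _ _).trans ?_
  simp only [Circle.norm_coe, sum_const, nsmul_eq_mul, mul_one, le_refl]

theorem norm_sum_Ico_mul_sub_succ_le {R : Type*} [NormedRing R] (c z : ℕ → R)
    (hz : ∀ k, ‖z k‖ ≤ 1) {a b : ℕ} (hab : a ≤ b) :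
    ‖∑ k ∈ Ico a (b + 1), c k * (z k - z (k + 1))‖
      ≤ ‖c a‖ + ‖c b‖ + ∑ k ∈ Ico a b, ‖c (k + 1) - c k‖ := by
  have abel : ∑ k ∈ Ico a (b + 1), c k * (z k - z (k + 1))
      = c a * z a - c b * z (b + 1) + ∑ k ∈ Ico a b, (c (k + 1) - c k) * z (k + 1) := by
    induction b, hab using Nat.le_induction with
    | base => simp [mul_sub]
    | succ b hab ih =>
      rw [sum_Ico_succ_top (by omega), ih, sum_Ico_succ_top hab]
      noncomm_ring
  have mul_z_le (w : R) (k : ℕ) : ‖w * z k‖ ≤ ‖w‖ :=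
    (norm_mul_le _ _).trans (mul_le_of_le_one_right (norm_nonneg _) (hz k))
  rw [abel]
  exact (norm_add_le _ _).trans (add_le_add
    ((norm_sub_le _ _).trans (add_le_add (mul_z_le _ _) (mul_z_le _ _)))
    (norm_sum_le_of_le _ fun k _ => mul_z_le _ _))

theorem norm_inv_one_sub_fourierChar_sub {u w : ℝ} (hu : 0 < u) (huw : u ≤ w) (hw : w < 1) :
    ‖((1 : ℂ) - 𝐞 w)⁻¹ - ((1 : ℂ) - 𝐞 u)⁻¹‖
      = ((1 : ℂ) - 𝐞 u)⁻¹.im - ((1 : ℂ) - 𝐞 w)⁻¹.im := by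
  have hπ := Real.pi_pos
  have mem {t : ℝ} (h₀ : 0 < t) (h₁ : t < 1) : Real.pi * t ∈ Set.Ioo 0 Real.pi :=
    ⟨by positivity, by nlinarith⟩
  have inv_eq {t : ℝ} (h₀ : 0 < t) (h₁ : t < 1) :=
    inv_one_sub_fourierChar (Real.sin_pos_of_mem_Ioo (mem h₀ h₁)).ne'
  have hcot : Real.cot (Real.pi * w) ≤ Real.cot (Real.pi * u) :=
    cot_antitoneOn (mem hu (huw.trans_lt hw)) (mem (hu.trans_le huw) hw)
      (mul_le_mul_of_nonneg_left huw hπ.le)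
  rw [inv_eq hu (huw.trans_lt hw), inv_eq (hu.trans_le huw) hw]
  generalize Real.cot (Real.pi * u) = p at *
  generalize Real.cot (Real.pi * w) = q at *
  have hsub : (1 + (q : ℂ) * Complex.I) / 2 - (1 + (p : ℂ) * Complex.I) / 2
      = ((q - p) / 2 : ℝ) * Complex.I := by
    push_cast
    ring
  rw [hsub, norm_mul, Complex.norm_I, mul_one, Complex.norm_real, Real.norm_eq_abs,
    abs_of_nonpos (by linarith)]
  simp only [Complex.add_im, Complex.div_ofNat_im, Complex.mul_im, Complex.one_im,
    Complex.I_im, Complex.I_re, Complex.ofReal_re, Complex.ofReal_im]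
  ring

theorem fourierChar_sub_intCast (t : ℝ) (v : ℤ) : 𝐞 (t - v) = 𝐞 t := by
  have hv : 𝐞 (v : ℝ) = 1 := by
    ext
    rw [Real.fourierChar_apply, Circle.coe_one, Complex.exp_eq_one_iff]
    exact ⟨v, by push_cast; ring⟩
  rw [AddChar.map_sub_eq_div, hv, div_one]

theorem fourierChar_eq_inv_mul_sub {s t : ℝ} (h : (1 : ℂ) - 𝐞 (t - s) ≠ 0) :
    (𝐞 s : ℂ) = ((1 : ℂ) - 𝐞 (t - s))⁻¹ * (𝐞 s - 𝐞 t) := by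
  have hst : (𝐞 t : ℂ) = 𝐞 (t - s) * 𝐞 s := by
    rw [← Circle.coe_mul, ← AddChar.map_add_eq_mul, sub_add_cancel]
  rw [hst, ← one_sub_mul, inv_mul_cancel_left₀ h]

theorem norm_sum_fourierChar_le_of_fwdDiff_mem_Ioo {g : ℕ → ℝ} {a n : ℕ} (han : a ≤ n)
    (hmem : ∀ k ∈ Icc a n, Δ_[1] g k ∈ Set.Ioo 0 1) (hmono : MonotoneOn (Δ_[1] g) (Icc a n)) :
    ‖∑ k ∈ Ico a (n + 1), (𝐞 (g k) : ℂ)‖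
      ≤ 2 * (‖(1 : ℂ) - 𝐞 (Δ_[1] g a)‖⁻¹ + ‖(1 : ℂ) - 𝐞 (Δ_[1] g n)‖⁻¹) := by
  set c : ℕ → ℂ := fun k => (1 - (𝐞 (Δ_[1] g k) : ℂ))⁻¹ with hc
  have variation : ∑ k ∈ Ico a n, ‖c (k + 1) - c k‖ = (c a).im - (c n).im := by
    rw [← neg_sub, ← sum_Ico_sub (fun k => (c k).im) han, ← sum_neg_distrib]
    refine sum_congr rfl fun k hk => ?_
    rw [mem_Ico] at hk
    have hk₀ : k ∈ Icc a n := mem_Icc.2 (by omega)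
    have hk₁ : k + 1 ∈ Icc a n := mem_Icc.2 (by omega)
    rw [neg_sub]
    exact norm_inv_one_sub_fourierChar_sub (hmem k hk₀).1 (hmono hk₀ hk₁ k.le_succ) (hmem _ hk₁).2
  have sum_eq : ∑ k ∈ Ico a (n + 1), (𝐞 (g k) : ℂ)
      = ∑ k ∈ Ico a (n + 1), c k * (𝐞 (g k) - 𝐞 (g (k + 1))) := by
    refine sum_congr rfl fun k hk => fourierChar_eq_inv_mul_sub ?_
    rw [← norm_pos_iff, norm_one_sub_fourierChar]
    obtain ⟨h₀, h₁⟩ := hmem k (by simpa only [mem_Ico, mem_Icc, Nat.lt_succ_iff] using hk)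
    exact mul_pos two_pos (abs_pos.2 (Real.sin_pos_of_pos_of_lt_pi
      (mul_pos Real.pi_pos h₀) (mul_lt_of_lt_one_right Real.pi_pos h₁)).ne')
  have ha := (abs_le.1 (Complex.abs_im_le_norm (c a))).2
  have hn := (abs_le.1 (Complex.abs_im_le_norm (c n))).1
  calc ‖∑ k ∈ Ico a (n + 1), (𝐞 (g k) : ℂ)‖
      ≤ ‖c a‖ + ‖c n‖ + ((c a).im - (c n).im) := by
        rw [sum_eq, ← variation]
        exact norm_sum_Ico_mul_sub_succ_le c _ (fun k => (Circle.norm_coe _).le) han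
    _ ≤ 2 * (‖c a‖ + ‖c n‖) := by linarith
    _ = _ := by simp only [hc, norm_inv]

/-- The Kusmin–Landau inequality. -/
theorem norm_sum_fourierChar_le_of_fwdDiff_mem_Icc {g : ℕ → ℝ} {a b : ℕ} {v : ℤ} {δ : ℝ}
    (hδ : 0 < δ) (hmem : ∀ k ∈ Ico a b, Δ_[1] g k ∈ Set.Icc (v + δ) (v + 1 - δ))
    (hmono : MonotoneOn (Δ_[1] g) (Ico a b)) :
    ‖∑ k ∈ Ico a b, (𝐞 (g k) : ℂ)‖ ≤ 1 / δ := by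
  rcases le_or_gt b a with hba | hab
  · rw [Ico_eq_empty_of_le hba, sum_empty, norm_zero]
    positivity
  obtain ⟨n, rfl⟩ : ∃ n, b = n + 1 := ⟨b - 1, by omega⟩
  have Ico_eq : Ico a (n + 1) = Icc a n := Ico_add_one_right_eq_Icc a n
  rw [Ico_eq] at hmem hmono
  set f : ℕ → ℝ := fun k => g k - (v * k : ℤ) with hf
  have fwdDiff_f : ∀ k, Δ_[1] f k = Δ_[1] g k - v := fun k => by
    simp only [hf, fwdDiff]
    push_cast
    ring
  have f_mem {k : ℕ} (hk : k ∈ Icc a n) : δ ≤ Δ_[1] f k ∧ Δ_[1] f k ≤ 1 - δ := by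
    rw [fwdDiff_f]
    exact ⟨by linarith [(hmem k hk).1], by linarith [(hmem k hk).2]⟩
  have inv_norm_le {k : ℕ} (hk : k ∈ Icc a n) : ‖(1 : ℂ) - 𝐞 (Δ_[1] f k)‖⁻¹ ≤ 1 / (4 * δ) := by
    have hsin := two_mul_le_sin_pi_mul hδ.le (f_mem hk).1 (f_mem hk).2
    rw [norm_one_sub_fourierChar, abs_of_pos (by linarith), ← one_div]
    exact one_div_le_one_div_of_le (by positivity) (by linarith)
  calc ‖∑ k ∈ Ico a (n + 1), (𝐞 (g k) : ℂ)‖ = ‖∑ k ∈ Ico a (n + 1), (𝐞 (f k) : ℂ)‖ := by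
        simp only [hf, fourierChar_sub_intCast]
    _ ≤ 2 * (‖(1 : ℂ) - 𝐞 (Δ_[1] f a)‖⁻¹ + ‖(1 : ℂ) - 𝐞 (Δ_[1] f n)‖⁻¹) := by
        refine norm_sum_fourierChar_le_of_fwdDiff_mem_Ioo (by omega) (fun k hk => ?_) ?_
        · exact ⟨hδ.trans_le (f_mem hk).1, (f_mem hk).2.trans_lt (by linarith)⟩
        · exact fun i hi j hj hij => by
            simpa only [fwdDiff_f, sub_le_sub_iff_right] using hmono hi hj hij
    _ ≤ 2 * (1 / (4 * δ) + 1 / (4 * δ)) := by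
        gcongr
        · exact inv_norm_le (left_mem_Icc.2 (by omega))
        · exact inv_norm_le (right_mem_Icc.2 (by omega))
    _ = 1 / δ := by field_simp; norm_num

theorem exists_eq_Ico_of_ordConnected {S : Finset ℕ} (hS : (S : Set ℕ).OrdConnected) :
    ∃ a b, S = Ico a b := by
  rcases S.eq_empty_or_nonempty with rfl | hne
  · exact ⟨0, 0, (Ico_self 0).symm⟩
  · refine ⟨S.min' hne, S.max' hne + 1, subset_antisymm (fun k hk => ?_) fun k hk => ?_⟩
    · exact mem_Ico.2 ⟨S.min'_le _ hk, Nat.lt_succ_of_le (S.le_max' _ hk)⟩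
    · rw [mem_Ico, Nat.lt_succ_iff] at hk
      exact hS.out (S.min'_mem hne) (S.max'_mem hne) hk

theorem card_le_of_mul_sub_le_sub {D : ℕ → ℝ} {S : Finset ℕ} {μ η p : ℝ} (hμ : 0 < μ) (hη : 0 ≤ η)
    (hD : ∀ i ∈ S, ∀ j ∈ S, i ≤ j → μ * ((j : ℝ) - i) ≤ D j - D i)
    (hS : ∀ i ∈ S, D i ∈ Set.Icc p (p + η)) : (#S : ℝ) ≤ η / μ + 1 := by
  rcases S.eq_empty_or_nonempty with rfl | hne
  · rw [card_empty, Nat.cast_zero]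
    positivity
  have hi := S.min'_mem hne
  have hj := S.max'_mem hne
  have hcard : #S + S.min' hne ≤ S.max' hne + 1 := by
    have hsub : S ⊆ Icc (S.min' hne) (S.max' hne) := fun k hk =>
      mem_Icc.2 ⟨S.min'_le _ hk, S.le_max' _ hk⟩
    have := card_le_card hsub
    have := S.min'_le _ hj
    rw [Nat.card_Icc] at *
    omega
  have hcard' : (#S : ℝ) + S.min' hne ≤ S.max' hne + 1 := by exact_mod_cast hcard
  have hspread : (S.max' hne : ℝ) - S.min' hne ≤ η / μ := by
    rw [le_div_iff₀' hμ]
    linarith [hD _ hi _ hj (S.min'_le _ hj), (hS _ hi).1, (hS _ hj).2]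
  linarith

theorem sub_mem_Icc_of_fwdDiff_mem_Icc {D : ℕ → ℝ} {a b : ℕ} {μ ν : ℝ}
    (h : ∀ k, a ≤ k → k + 1 < b → Δ_[1] D k ∈ Set.Icc μ ν) {i j : ℕ} (hi : i ∈ Ico a b)
    (hj : j ∈ Ico a b) (hij : i ≤ j) : D j - D i ∈ Set.Icc (μ * (j - i)) (ν * (j - i)) := by
  rw [mem_Ico] at hi hj
  induction j, hij using Nat.le_induction with
  | base => simp only [sub_self, mul_zero, Set.Icc_self, Set.mem_singleton_iff]
  | succ j hij ih =>
    obtain ⟨hstep₁, hstep₂⟩ := h j (hi.1.trans hij) hj.2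
    obtain ⟨ih₁, ih₂⟩ := ih ⟨hi.1.trans hij, by omega⟩
    rw [fwdDiff] at hstep₁ hstep₂
    push_cast
    exact ⟨by linarith, by linarith⟩

theorem sub_le_mul_sub_of_fwdDiff_mem_Icc {D : ℕ → ℝ} {a b : ℕ} {μ ν : ℝ} (hμ : 0 ≤ μ)
    (hμν : μ ≤ ν) (h : ∀ k, a ≤ k → k + 1 < b → Δ_[1] D k ∈ Set.Icc μ ν) {i j : ℕ}
    (hi : i ∈ Ico a b) (hj : j ∈ Ico a b) : D j - D i ≤ ν * (b - a) := by
  have hν := hμ.trans hμν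
  obtain ⟨hai, hib⟩ : (a : ℝ) ≤ i ∧ (i : ℝ) ≤ b := by
    exact_mod_cast And.imp_right le_of_lt (mem_Ico.1 hi)
  have hjb : (j : ℝ) ≤ b := Nat.cast_le.2 (mem_Ico.1 hj).2.le
  rcases le_total i j with hij | hji
  · exact (sub_mem_Icc_of_fwdDiff_mem_Icc h hi hj hij).2.trans
      (mul_le_mul_of_nonneg_left (by linarith) hν)
  · have hgrow := (sub_mem_Icc_of_fwdDiff_mem_Icc h hj hi hji).1
    have hμij := mul_nonneg hμ (sub_nonneg.2 (Nat.cast_le (α := ℝ).2 hji))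
    have hνab : 0 ≤ ν * (b - a) := mul_nonneg hν (by linarith)
    linarith

theorem norm_sum_fourierChar_filter_fwdDiff_mem_Icc_le {g : ℕ → ℝ} {a b : ℕ} (v : ℤ) {δ : ℝ}
    (hδ : 0 < δ) (hmono : MonotoneOn (Δ_[1] g) (Ico a b)) :
    ‖∑ k ∈ Ico a b with Δ_[1] g k ∈ Set.Icc (v + δ) (v + 1 - δ), (𝐞 (g k) : ℂ)‖ ≤ 1 / δ := by
  set G : Finset ℕ := {k ∈ Ico a b | Δ_[1] g k ∈ Set.Icc (v + δ) (v + 1 - δ)} with hG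
  have ordConnected : (G : Set ℕ).OrdConnected := ⟨fun i hi j hj k hk => by
    rw [mem_coe, hG, mem_filter] at hi hj ⊢
    have hk' : k ∈ Ico a b :=
      mem_Ico.2 ⟨(mem_Ico.1 hi.1).1.trans hk.1, hk.2.trans_lt (mem_Ico.1 hj.1).2⟩
    exact ⟨hk', hi.2.1.trans (hmono hi.1 hk' hk.1), (hmono hk' hj.1 hk.2).trans hj.2.2⟩⟩
  obtain ⟨c, d, hcd⟩ := exists_eq_Ico_of_ordConnected ordConnected
  have mem_G {k : ℕ} (hk : k ∈ Ico c d) := mem_filter.1 (hcd ▸ hk)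
  rw [hcd]
  exact norm_sum_fourierChar_le_of_fwdDiff_mem_Icc hδ (fun k hk => (mem_G hk).2)
    (hmono.mono fun k hk => (mem_G hk).1)

theorem norm_sum_fourierChar_filter_floor_le {g : ℕ → ℝ} {a b : ℕ} {μ δ : ℝ} (v : ℤ) (hμ : 0 < μ)
    (hδ : 0 < δ) (hgrow : ∀ i ∈ Ico a b, ∀ j ∈ Ico a b, i ≤ j →
      μ * ((j : ℝ) - i) ≤ Δ_[1] g j - Δ_[1] g i) :
    ‖∑ k ∈ Ico a b with ⌊Δ_[1] g k⌋ = v, (𝐞 (g k) : ℂ)‖ ≤ 1 / δ + 2 * (δ / μ + 1) := by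
  have hmono : MonotoneOn (Δ_[1] g) (Ico a b) := fun i hi j hj hij =>
    sub_nonneg.1 ((mul_nonneg hμ.le (sub_nonneg.2 (Nat.cast_le.2 hij))).trans (hgrow i hi j hj hij))
  have card_near_le (p : ℝ) :
      (#{k ∈ Ico a b | Δ_[1] g k ∈ Set.Icc p (p + δ)} : ℝ) ≤ δ / μ + 1 :=
    card_le_of_mul_sub_le_sub hμ hδ.le
      (fun i hi j hj hij => hgrow i (mem_filter.1 hi).1 j (mem_filter.1 hj).1 hij)
      fun k hk => (mem_filter.1 hk).2
  set F : Finset ℕ := {k ∈ Ico a b | ⌊Δ_[1] g k⌋ = v} with hF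
  set G : Finset ℕ := {k ∈ Ico a b | Δ_[1] g k ∈ Set.Icc (v + δ) (v + 1 - δ)} with hG
  have G_subset : G ⊆ F := fun k hk => by
    rw [hF, mem_filter, Int.floor_eq_iff]
    obtain ⟨hk, h₁, h₂⟩ := mem_filter.1 hk
    exact ⟨hk, by linarith, by linarith⟩
  have sdiff_subset : F \ G ⊆ {k ∈ Ico a b | Δ_[1] g k ∈ Set.Icc (v : ℝ) (v + δ)}
      ∪ {k ∈ Ico a b | Δ_[1] g k ∈ Set.Icc (v + 1 - δ) (v + 1 - δ + δ)} := fun k hk => by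
    rw [Finset.mem_sdiff, hF, hG, mem_filter, mem_filter, Int.floor_eq_iff] at hk
    obtain ⟨⟨hk, h₁, h₂⟩, hkG⟩ := hk
    rw [mem_union, mem_filter, mem_filter]
    rcases le_or_gt (Δ_[1] g k) (v + δ) with h | h
    · exact Or.inl ⟨hk, h₁, h⟩
    · exact Or.inr ⟨hk, not_lt.1 fun h' => hkG ⟨hk, h.le, h'.le⟩, by linarith⟩
  have card_sdiff_le : (#(F \ G) : ℝ) ≤ (δ / μ + 1) + (δ / μ + 1) :=
    (Nat.cast_le.2 ((card_le_card sdiff_subset).trans (card_union_le _ _))).trans (by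
      rw [Nat.cast_add]
      exact add_le_add (card_near_le _) (card_near_le _))
  rw [← sum_sdiff G_subset, add_comm, two_mul]
  exact (norm_add_le _ _).trans (add_le_add
    (norm_sum_fourierChar_filter_fwdDiff_mem_Icc_le v hδ hmono)
    ((norm_sum_fourierChar_le_card _ _).trans card_sdiff_le))

theorem card_image_floor_le {ι : Type*} {S : Finset ι} {D : ι → ℝ} {V : ℝ} (hV : 0 ≤ V)
    (hD : ∀ i ∈ S, ∀ j ∈ S, D j - D i ≤ V) : (#(S.image fun k => ⌊D k⌋) : ℝ) ≤ V + 2 := by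
  rcases S.eq_empty_or_nonempty with rfl | hne
  · rw [image_empty, card_empty, Nat.cast_zero]
    positivity
  obtain ⟨i, hi, min_i⟩ := S.exists_min_image D hne
  obtain ⟨j, hj, max_j⟩ := S.exists_max_image D hne
  have hsub : S.image (fun k => ⌊D k⌋) ⊆ Icc ⌊D i⌋ ⌊D j⌋ := image_subset_iff.2 fun k hk =>
    mem_Icc.2 ⟨Int.floor_le_floor (min_i k hk), Int.floor_le_floor (max_j k hk)⟩
  have hcard : (#(Icc ⌊D i⌋ ⌊D j⌋) : ℝ) = ⌊D j⌋ + 1 - ⌊D i⌋ := by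
    have hij : ⌊D i⌋ ≤ ⌊D j⌋ + 1 := by linarith [Int.floor_le_floor (min_i j hj)]
    exact_mod_cast Int.card_Icc_of_le _ _ hij
  have hcard_le : (#(S.image fun k => ⌊D k⌋) : ℝ) ≤ #(Icc ⌊D i⌋ ⌊D j⌋) :=
    Nat.cast_le.2 (card_le_card hsub)
  linarith [hD i hi j hj, Int.floor_le (D j), Int.lt_floor_add_one (D i)]

/-- Van der Corput's second-derivative test. -/
theorem norm_sum_fourierChar_le_of_fwdDiff_fwdDiff_mem_Icc {g : ℕ → ℝ} {a b : ℕ} {μ ν : ℝ}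
    (hμ : 0 < μ) (hμν : μ ≤ ν) (hab : a ≤ b)
    (hmem : ∀ k, a ≤ k → k + 1 < b → Δ_[1] (Δ_[1] g) k ∈ Set.Icc μ ν) :
    ‖∑ k ∈ Ico a b, (𝐞 (g k) : ℂ)‖ ≤ 5 * (ν * (b - a) + 2) / √μ := by
  have hν : 0 < ν := hμ.trans_le hμν
  have hsqrt : 0 < √μ := Real.sqrt_pos.2 hμ
  have hlen : (0 : ℝ) ≤ b - a := sub_nonneg.2 (Nat.cast_le.2 hab)
  rcases le_or_gt μ 1 with hμ1 | hμ1
  · have hsqrt1 : √μ ≤ 1 := Real.sqrt_le_one.2 hμ1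
    have hgrow : ∀ i ∈ Ico a b, ∀ j ∈ Ico a b, i ≤ j →
        μ * ((j : ℝ) - i) ≤ Δ_[1] g j - Δ_[1] g i := fun i hi j hj hij =>
      (sub_mem_Icc_of_fwdDiff_mem_Icc hmem hi hj hij).1
    have fiber_le (v : ℤ) : ‖∑ k ∈ Ico a b with ⌊Δ_[1] g k⌋ = v, (𝐞 (g k) : ℂ)‖ ≤ 5 / √μ := by
      refine (norm_sum_fourierChar_filter_floor_le v hμ hsqrt hgrow).trans ?_
      rw [Real.sqrt_div_self', le_div_iff₀ hsqrt]
      field_simp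
      linarith
    rw [← sum_fiberwise_of_maps_to fun k hk => mem_image_of_mem (fun k => ⌊Δ_[1] g k⌋) hk]
    calc _ ≤ ∑ v ∈ (Ico a b).image fun k => ⌊Δ_[1] g k⌋, 5 / √μ :=
          norm_sum_le_of_le _ fun v _ => fiber_le v
      _ ≤ (ν * (b - a) + 2) * (5 / √μ) := by
          rw [sum_const, nsmul_eq_mul]
          gcongr
          exact card_image_floor_le (by positivity) fun i hi j hj =>
            sub_le_mul_sub_of_fwdDiff_mem_Icc hμ.le hμν hmem hi hj
      _ = 5 * (ν * (b - a) + 2) / √μ := by ring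
  · have hsqrt_le : √μ ≤ ν := (Real.sqrt_le_iff.2 ⟨hμ.le, by nlinarith⟩).trans hμν
    calc ‖∑ k ∈ Ico a b, (𝐞 (g k) : ℂ)‖ ≤ b - a := by
          rw [← Nat.cast_sub hab, ← Nat.card_Ico]
          exact norm_sum_fourierChar_le_card _ _
      _ = √μ * (b - a) / √μ := by field_simp
      _ ≤ 5 * (ν * (b - a) + 2) / √μ := by
          refine div_le_div_of_nonneg_right ?_ hsqrt.le
          linarith [mul_le_mul_of_nonneg_right hsqrt_le hlen, mul_nonneg hν.le hlen]

theorem fwdDiff_fwdDiff_div_mem_Icc {Y θ : ℝ} (hY : 0 ≤ Y) (hθ : θ ∈ Set.Icc (0 : ℝ) 1) {N k : ℕ}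
    (hN : 0 < N) (hNk : N ≤ k) (hkN : k + 1 < 2 * N) :
    Δ_[1] (Δ_[1] fun k : ℕ => Y / ((k : ℝ) + θ)) k
      ∈ Set.Icc (Y / (4 * N ^ 3)) (2 * Y / N ^ 3) := by
  obtain ⟨hθ₀, hθ₁⟩ := hθ
  have hN₀ : (0 : ℝ) < N := Nat.cast_pos.2 hN
  have hNk' : (N : ℝ) ≤ k := Nat.cast_le.2 hNk
  have hkN' : (k : ℝ) + 1 + θ ≤ 2 * N := by
    have : (k : ℝ) + 2 ≤ 2 * N := by exact_mod_cast (by omega : k + 2 ≤ 2 * N)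
    linarith
  have hk₀ : 0 < (k : ℝ) + θ := by linarith
  have eq : Δ_[1] (Δ_[1] fun k : ℕ => Y / ((k : ℝ) + θ)) k
      = 2 * Y / ((k + θ) * (k + 1 + θ) * (k + 2 + θ)) := by
    simp only [fwdDiff]
    push_cast
    field_simp
    ring
  rw [eq, show Y / (4 * (N : ℝ) ^ 3) = 2 * Y / (2 * N) ^ 3 by field_simp; norm_num]
  constructor <;> gcongr 2 * Y / ?_
  · calc ((k : ℝ) + θ) * (k + 1 + θ) * (k + 2 + θ) ≤ (k + 1 + θ) ^ 3 := by nlinarith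
      _ ≤ (2 * N) ^ 3 := by gcongr
  · calc (N : ℝ) ^ 3 = N * N * N := by ring
      _ ≤ (k + θ) * (k + 1 + θ) * (k + 2 + θ) := by gcongr <;> linarith

theorem norm_sum_fourierChar_div_le {Y θ : ℝ} (hY : 0 < Y) (hθ : θ ∈ Set.Icc (0 : ℝ) 1)
    {N a b : ℕ} (hN : 0 < N) (ha : N ≤ a) (hb : b ≤ 2 * N) :
    ‖∑ k ∈ Ico a b, (𝐞 (Y / (k + θ)) : ℂ)‖ ≤ 20 * (√(Y / N) + √(N ^ 3 / Y)) := by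
  rcases lt_or_ge b a with hba | hab
  · rw [Ico_eq_empty_of_le hba.le, sum_empty, norm_zero]
    positivity
  have hN₀ : (0 : ℝ) < N := Nat.cast_pos.2 hN
  set q : ℝ := √(N ^ 3 / Y) with hq
  have hq₀ : 0 < q := by positivity
  have hYq : Y * q ^ 2 = N ^ 3 := by rw [hq, Real.sq_sqrt (by positivity)]; field_simp
  have sqrt_div : √(Y / N) = N / q := by
    rw [Real.sqrt_eq_iff_mul_self_eq (by positivity) (by positivity)]
    field_simp
    linear_combination hYq
  have sqrt_div_cube : √(Y / (4 * N ^ 3)) = 1 / (2 * q) := by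
    rw [Real.sqrt_eq_iff_mul_self_eq (by positivity) (by positivity)]
    field_simp
    linear_combination 4 * hYq
  have hlen : (b : ℝ) - a ≤ N := by
    rw [← Nat.cast_sub hab, Nat.cast_le]
    omega
  have hbounds : Y / (4 * N ^ 3) ≤ 2 * Y / N ^ 3 := by
    rw [div_le_div_iff₀ (by positivity) (by positivity)]
    nlinarith [mul_pos hY (pow_pos hN₀ 3)]
  calc ‖∑ k ∈ Ico a b, (𝐞 (Y / (k + θ)) : ℂ)‖
      ≤ 5 * (2 * Y / N ^ 3 * (b - a) + 2) / √(Y / (4 * N ^ 3)) :=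
        norm_sum_fourierChar_le_of_fwdDiff_fwdDiff_mem_Icc (by positivity) hbounds hab
          fun k hk hkb => fwdDiff_fwdDiff_div_mem_Icc hY.le hθ hN (ha.trans hk) (by omega)
    _ ≤ 5 * (2 * Y / N ^ 3 * N + 2) / √(Y / (4 * N ^ 3)) := by gcongr
    _ = 20 * (√(Y / N) + q) := by
        rw [sqrt_div, sqrt_div_cube, ← hYq]
        field_simp
        ring

/-! ### Sums of the sawtooth function -/

/-- The sawtooth function, with value `-1/2` at the integers. -/
noncomputable def sawtooth (t : ℝ) : ℝ := Int.fract t - 1 / 2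

theorem hasSum_cos_bernoulliFun_two_fract (t : ℝ) :
    HasSum (fun h : ℕ => 1 / (h : ℝ) ^ 2 * Real.cos (2 * Real.pi * h * t))
      (Real.pi ^ 2 * bernoulliFun 2 (Int.fract t)) := by
  have hcos (h : ℕ) :
      Real.cos (2 * Real.pi * h * t) = Real.cos (2 * Real.pi * h * Int.fract t) := by
    rw [← Real.cos_add_int_mul_two_pi (2 * Real.pi * h * Int.fract t) (h * ⌊t⌋)]
    congr 1
    push_cast
    linear_combination -2 * Real.pi * h * Int.floor_add_fract t
  simp only [hcos]
  convert hasSum_one_div_nat_pow_mul_cos one_ne_zero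
    (x := Int.fract t) ⟨Int.fract_nonneg t, (Int.fract_lt_one t).le⟩ using 1
  · simp only [mul_one]
  · rw [mul_one, ← bernoulliFun, Nat.factorial_two]
    push_cast
    ring

theorem bernoulliFun_two_fract_le (u : ℝ) : bernoulliFun 2 (Int.fract u) ≤ bernoulliFun 2 u := by
  have hfract₀ := Int.fract_nonneg u
  have hfract₁ := Int.fract_lt_one u
  rw [bernoulliFun_two, bernoulliFun_two]
  rcases lt_trichotomy ⌊u⌋ 0 with h | h | h
  · have : (⌊u⌋ : ℝ) ≤ -1 := by exact_mod_cast Int.le_sub_one_of_lt h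
    nlinarith [Int.floor_add_fract u]
  · rw [Int.fract, h, Int.cast_zero, sub_zero]
  · have : (1 : ℝ) ≤ ⌊u⌋ := by exact_mod_cast h
    nlinarith [Int.floor_add_fract u]

theorem bernoulliFun_two_fract_add_le (t δ : ℝ) :
    bernoulliFun 2 (Int.fract (t + δ))
      ≤ bernoulliFun 2 (Int.fract t) + 2 * δ * sawtooth t + δ ^ 2 := by
  have hfract : Int.fract (t + δ) = Int.fract (Int.fract t + δ) := by
    rw [Int.fract_eq_fract]
    exact ⟨⌊t⌋, by linarith [Int.floor_add_fract t]⟩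
  calc bernoulliFun 2 (Int.fract (t + δ)) ≤ bernoulliFun 2 (Int.fract t + δ) :=
        hfract ▸ bernoulliFun_two_fract_le _
    _ = bernoulliFun 2 (Int.fract t) + 2 * δ * sawtooth t + δ ^ 2 := by
        rw [bernoulliFun_two, bernoulliFun_two, sawtooth]
        ring

theorem min_sq_one_mul_one_add_sq_le {v : ℝ} (hv : 0 ≤ v) :
    min (v ^ 2) 1 * (1 + v) ^ 2 ≤ 4 * v ^ 2 := by
  rcases le_total v 1 with hv1 | hv1
  · calc min (v ^ 2) 1 * (1 + v) ^ 2 ≤ v ^ 2 * (1 + 1) ^ 2 := by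
          gcongr
          exact min_le_left _ _
      _ = 4 * v ^ 2 := by ring
  · calc min (v ^ 2) 1 * (1 + v) ^ 2 ≤ 1 * (v + v) ^ 2 := by
          gcongr
          exact min_le_right _ _
      _ = 4 * v ^ 2 := by ring

-- A telescoping majorant: the increments of `√h / (1 + √(δ h))` have the size of the left side.
theorem min_mul_sqrt_div_sq_le {δ : ℝ} (hδ : 0 < δ) (h : ℕ) :
    min (δ * (h + 1 : ℕ)) 1 * √(h + 1 : ℕ) / (h + 1 : ℕ) ^ 2
      ≤ 8 * δ * (√(h + 1 : ℕ) / (1 + √δ * √(h + 1 : ℕ)) - √h / (1 + √δ * √h)) := by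
  have hw : √δ ^ 2 = δ := Real.sq_sqrt hδ.le
  have hs : √(h + 1 : ℕ) ^ 2 = (h + 1 : ℕ) := Real.sq_sqrt (Nat.cast_nonneg _)
  have hr : √(h : ℝ) ^ 2 = h := Real.sq_sqrt (Nat.cast_nonneg _)
  have hrs : √(h : ℝ) ≤ √(h + 1 : ℕ) := Real.sqrt_le_sqrt (Nat.cast_le.2 h.le_succ)
  have hw₀ : 0 < √δ := Real.sqrt_pos.2 hδ
  have hr₀ : 0 ≤ √(h : ℝ) := Real.sqrt_nonneg _
  have hs₀ : 0 < √(h + 1 : ℕ) := Real.sqrt_pos.2 (by positivity)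
  have hdiff : √(h + 1 : ℕ) ^ 2 - √(h : ℝ) ^ 2 = 1 := by
    rw [hs, hr]
    push_cast
    ring
  rw [← hs, ← hw, Real.sqrt_sq hw₀.le, Real.sqrt_sq hs₀.le]
  generalize √(h + 1 : ℕ) = s at *
  generalize √(h : ℝ) = r at *
  generalize √δ = w at *
  have hmin := min_sq_one_mul_one_add_sq_le (mul_nonneg hw₀.le hs₀.le)
  rw [← mul_pow]
  calc min ((w * s) ^ 2) 1 * s / (s ^ 2) ^ 2
      ≤ 8 * w ^ 2 / ((s + s) * (1 + w * s) * (1 + w * s)) := by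
        rw [div_le_div_iff₀ (by positivity) (by positivity)]
        calc _ = 2 * s ^ 2 * (min ((w * s) ^ 2) 1 * (1 + w * s) ^ 2) := by ring
          _ ≤ 2 * s ^ 2 * (4 * (w * s) ^ 2) := by gcongr
          _ = _ := by ring
    _ ≤ 8 * w ^ 2 / ((s + r) * (1 + w * s) * (1 + w * r)) := by gcongr
    _ = 8 * w ^ 2 * (s / (1 + w * s) - r / (1 + w * r)) := by
        field_simp
        linear_combination -hdiff

theorem sum_min_mul_sqrt_div_sq_le {δ : ℝ} (hδ : 0 < δ) (H : ℕ) :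
    ∑ h ∈ range H, min (δ * h) 1 * √h / h ^ 2 ≤ 8 * √δ := by
  rcases H with _ | H
  · rw [sum_range_zero]
    positivity
  have hδ' : 0 < √δ := Real.sqrt_pos.2 hδ
  calc ∑ h ∈ range (H + 1), min (δ * h) 1 * √h / h ^ 2
      = ∑ h ∈ range H, min (δ * (h + 1 : ℕ)) 1 * √(h + 1 : ℕ) / (h + 1 : ℕ) ^ 2 := by
        rw [sum_range_succ', Nat.cast_zero, Real.sqrt_zero, mul_zero, zero_div, add_zero]
    _ ≤ ∑ h ∈ range H, 8 * δ *
          (√(h + 1 : ℕ) / (1 + √δ * √(h + 1 : ℕ)) - √h / (1 + √δ * √h)) :=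
        sum_le_sum fun h _ => min_mul_sqrt_div_sq_le hδ h
    _ = 8 * δ * (√H / (1 + √δ * √H)) := by
        rw [← mul_sum, sum_range_sub (fun h : ℕ => √(h : ℝ) / (1 + √δ * √(h : ℝ)))]
        simp
    _ ≤ 8 * δ * (1 / √δ) := by
        gcongr 8 * δ * ?_
        rw [div_le_div_iff₀ (by positivity) hδ']
        linarith
    _ = 8 * √δ := by rw [mul_assoc, mul_one_div, Real.div_sqrt]

theorem norm_fourierChar_sub_one_le (t : ℝ) :
    ‖(𝐞 t : ℂ) - 1‖ ≤ 2 * Real.pi * min |t| 1 := by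
  rw [mul_min_of_nonneg _ _ (by positivity), le_min_iff]
  constructor
  · rw [Real.fourierChar_apply, mul_comm]
    refine Real.norm_exp_I_mul_ofReal_sub_one_le.trans_eq ?_
    rw [Real.norm_eq_abs, abs_mul, abs_of_pos Real.two_pi_pos]
  · calc ‖(𝐞 t : ℂ) - 1‖ ≤ ‖(𝐞 t : ℂ)‖ + ‖(1 : ℂ)‖ := norm_sub_le _ _
      _ ≤ 2 * Real.pi * 1 := by
        rw [Circle.norm_coe, norm_one]
        linarith [Real.pi_gt_three]

theorem sum_cos_add_sub_cos {ι : Type*} (S : Finset ι) (t : ι → ℝ) (δ h : ℝ) :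
    ∑ k ∈ S, (Real.cos (2 * Real.pi * h * (t k + δ)) - Real.cos (2 * Real.pi * h * t k))
      = ((∑ k ∈ S, (𝐞 (h * t k) : ℂ)) * (𝐞 (h * δ) - 1)).re := by
  have hre (u : ℝ) : (𝐞 u : ℂ).re = Real.cos (2 * Real.pi * u) := by
    rw [Real.fourierChar_apply, Complex.exp_ofReal_mul_I_re]
  rw [sum_mul, Complex.re_sum]
  refine sum_congr rfl fun k _ => ?_
  rw [mul_sub, mul_one, ← Circle.coe_mul, ← AddChar.map_add_eq_mul, Complex.sub_re, hre, hre,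
    ← mul_add]
  congr 2 <;> ring

theorem mul_norm_fourierChar_sub_one_div_sq_le {A A' : ℝ} (hA : 0 ≤ A) (hA' : 0 ≤ A') (δ : ℝ)
    {h : ℕ} (hh : 0 < h) :
    (A * √h + A' / √h) * ‖(𝐞 (h * δ) : ℂ) - 1‖ / h ^ 2
      ≤ 2 * Real.pi * (A * (min (|δ| * h) 1 * √h / h ^ 2)
          + A' * |δ| * (min (1 * (h : ℝ)) 1 * √h / h ^ 2)) := by
  have hh' : (1 : ℝ) ≤ h := Nat.one_le_cast.2 hh
  have hchar : ‖(𝐞 (h * δ) : ℂ) - 1‖ ≤ 2 * Real.pi * min (|δ| * h) 1 := by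
    have := norm_fourierChar_sub_one_le (h * δ)
    rwa [abs_mul, Nat.abs_cast, mul_comm (h : ℝ) |δ|] at this
  calc (A * √h + A' / √h) * ‖(𝐞 (h * δ) : ℂ) - 1‖ / h ^ 2
      ≤ (A * √h + A' / √h) * (2 * Real.pi * min (|δ| * h) 1) / h ^ 2 := by gcongr
    _ = 2 * Real.pi * (A * (min (|δ| * h) 1 * √h / h ^ 2)
          + A' * (min (|δ| * h) 1 / √h / h ^ 2)) := by ring
    _ ≤ 2 * Real.pi * (A * (min (|δ| * h) 1 * √h / h ^ 2)
          + A' * (|δ| * h / √h / h ^ 2)) := by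
        gcongr
        exact min_le_left _ _
    _ = _ := by
        rw [one_mul, min_eq_right hh', mul_div_assoc |δ|, Real.div_sqrt]
        ring

theorem hasSum_re_sum_fourierChar_mul {ι : Type*} (S : Finset ι) (t : ι → ℝ) (δ : ℝ) :
    HasSum (fun h : ℕ => ((∑ k ∈ S, (𝐞 (h * t k) : ℂ)) * (𝐞 (h * δ) - 1)).re / h ^ 2)
      (Real.pi ^ 2 *
        ∑ k ∈ S, (bernoulliFun 2 (Int.fract (t k + δ)) - bernoulliFun 2 (Int.fract (t k)))) := by
  simp only [← sum_cos_add_sub_cos]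
  simp only [sum_div, mul_sum, sub_div, mul_sub, div_eq_inv_mul (Real.cos _), ← one_div]
  exact hasSum_sum fun k _ => (hasSum_cos_bernoulliFun_two_fract (t k + δ)).sub
    (hasSum_cos_bernoulliFun_two_fract (t k))

theorem abs_sum_bernoulliFun_two_fract_add_sub_le {ι : Type*} {S : Finset ι} {t : ι → ℝ}
    {δ A A' : ℝ} (hδ : δ ≠ 0) (hA : 0 ≤ A) (hA' : 0 ≤ A')
    (hexp : ∀ h : ℕ, 0 < h → ‖∑ k ∈ S, (𝐞 (h * t k) : ℂ)‖ ≤ A * √h + A' / √h) :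
    |∑ k ∈ S, (bernoulliFun 2 (Int.fract (t k + δ)) - bernoulliFun 2 (Int.fract (t k)))|
      ≤ 6 * (A * √|δ| + A' * |δ|) := by
  set c : ℕ → ℝ := fun h =>
    ((∑ k ∈ S, (𝐞 (h * t k) : ℂ)) * (𝐞 (h * δ) - 1)).re / h ^ 2 with hc
  have hterm (h : ℕ) : |c h| ≤ 2 * Real.pi * (A * (min (|δ| * h) 1 * √h / h ^ 2)
      + A' * |δ| * (min (1 * (h : ℝ)) 1 * √h / h ^ 2)) := by
    rcases h.eq_zero_or_pos with rfl | hpos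
    · simp [hc]
    refine le_trans ?_ (mul_norm_fourierChar_sub_one_div_sq_le hA hA' δ hpos)
    rw [abs_div, abs_of_nonneg (sq_nonneg (h : ℝ))]
    gcongr
    refine (Complex.abs_re_le_norm _).trans ?_
    rw [norm_mul]
    gcongr
    exact hexp h hpos
  have hpartial (H : ℕ) :
      |∑ h ∈ range H, c h| ≤ 2 * Real.pi * (A * (8 * √|δ|) + A' * |δ| * (8 * √1)) := by
    refine (abs_sum_le_sum_abs _ _).trans ((sum_le_sum fun h _ => hterm h).trans ?_)
    rw [← mul_sum, sum_add_distrib, ← mul_sum, ← mul_sum]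
    gcongr
    · exact sum_min_mul_sqrt_div_sq_le (abs_pos.2 hδ) H
    · exact sum_min_mul_sqrt_div_sq_le one_pos H
  have hlim := le_of_tendsto (hasSum_re_sum_fourierChar_mul S t δ).tendsto_sum_nat.abs
    (Eventually.of_forall hpartial)
  rw [abs_mul, abs_of_pos (by positivity : 0 < Real.pi ^ 2), Real.sqrt_one] at hlim
  refine le_of_mul_le_mul_left (hlim.trans ?_) (by positivity : 0 < Real.pi ^ 2)
  have hπ : 16 * Real.pi ≤ 6 * Real.pi ^ 2 := by nlinarith [Real.pi_gt_three]
  calc _ = 16 * Real.pi * (A * √|δ| + A' * |δ|) := by ring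
    _ ≤ 6 * Real.pi ^ 2 * (A * √|δ| + A' * |δ|) := by gcongr
    _ = _ := by ring

-- Since `2δψ(t)` lies between `B₂({t}) - B₂({t - δ}) + δ²` and `B₂({t + δ}) - B₂({t}) - δ²`, the
-- sawtooth inherits bounds from the absolutely convergent Fourier series of `B₂`.
theorem abs_sum_sawtooth_le {ι : Type*} {S : Finset ι} {t : ι → ℝ} {δ A A' : ℝ} (hδ : 0 < δ)
    (hA : 0 ≤ A) (hA' : 0 ≤ A')
    (hexp : ∀ h : ℕ, 0 < h → ‖∑ k ∈ S, (𝐞 (h * t k) : ℂ)‖ ≤ A * √h + A' / √h) :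
    |∑ k ∈ S, sawtooth (t k)| ≤ #S * δ / 2 + 3 * (A / √δ + A') := by
  have hlower := abs_sum_bernoulliFun_two_fract_add_sub_le hδ.ne' hA hA' hexp
  have hupper := abs_sum_bernoulliFun_two_fract_add_sub_le (neg_ne_zero.2 hδ.ne') hA hA' hexp
  rw [abs_of_pos hδ] at hlower
  rw [abs_neg, abs_of_pos hδ] at hupper
  have hshift (ε : ℝ) :
      ∑ k ∈ S, (bernoulliFun 2 (Int.fract (t k + ε)) - bernoulliFun 2 (Int.fract (t k)))
        ≤ 2 * ε * ∑ k ∈ S, sawtooth (t k) + #S * ε ^ 2 := by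
    rw [mul_sum, ← nsmul_eq_mul, ← sum_const, ← sum_add_distrib]
    exact sum_le_sum fun k _ => by linarith [bernoulliFun_two_fract_add_le (t k) ε]
  have hbound : #S * δ ^ 2 + 6 * (A * √δ + A' * δ)
      = 2 * δ * (#S * δ / 2 + 3 * (A / √δ + A')) := by
    have : A * √δ = δ * (A / √δ) := by
      rw [mul_div_left_comm, Real.div_sqrt]
    rw [this]
    ring
  rw [abs_le]
  constructor <;> refine le_of_mul_le_mul_left ?_ (by positivity : 0 < 2 * δ)
  · linarith [hshift δ, abs_le.1 hlower]
  · linarith [hshift (-δ), abs_le.1 hupper]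

theorem rpow_one_third_pow_three {y : ℝ} (hy : 0 ≤ y) : (y ^ ((1 : ℝ) / 3)) ^ 3 = y := by
  rw [← Real.rpow_natCast, ← Real.rpow_mul hy, Nat.cast_ofNat, div_mul_cancel₀ _ three_ne_zero,
    Real.rpow_one]

section SawtoothDiv

variable {y θ : ℝ} (hy : 0 < y) (hθ : θ ∈ Set.Icc (0 : ℝ) 1) (c : ℝ)
include hy hθ

theorem norm_sum_fourierChar_mul_div_add_le {N a b : ℕ} (hN : 0 < N) (ha : N ≤ a)
    (hb : b ≤ 2 * N) {h : ℕ} (hh : 0 < h) :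
    ‖∑ k ∈ Ico a b, (𝐞 (h * (y / (k + θ) + c)) : ℂ)‖
      ≤ 20 * √(y / N) * √h + 20 * √(N ^ 3 / y) / √h := by
  have hh' : (0 : ℝ) < h := Nat.cast_pos.2 hh
  have hfactor : ∑ k ∈ Ico a b, (𝐞 (h * (y / (k + θ) + c)) : ℂ)
      = (∑ k ∈ Ico a b, (𝐞 (h * y / (k + θ)) : ℂ)) * 𝐞 (h * c) := by
    rw [sum_mul]
    refine sum_congr rfl fun k _ => ?_
    rw [mul_add, AddChar.map_add_eq_mul, Circle.coe_mul, mul_div_assoc]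
  calc ‖∑ k ∈ Ico a b, (𝐞 (h * (y / (k + θ) + c)) : ℂ)‖
      = ‖∑ k ∈ Ico a b, (𝐞 (h * y / (k + θ)) : ℂ)‖ := by
        rw [hfactor, norm_mul, Circle.norm_coe, mul_one]
    _ ≤ 20 * (√(h * y / N) + √(N ^ 3 / (h * y))) :=
        norm_sum_fourierChar_div_le (mul_pos hh' hy) hθ hN ha hb
    _ = 20 * √(y / N) * √h + 20 * √(N ^ 3 / y) / √h := by
        rw [mul_comm (h : ℝ), mul_div_right_comm, ← div_div, Real.sqrt_mul (by positivity),
          Real.sqrt_div (x := (N : ℝ) ^ 3 / y) (by positivity)]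
        ring

theorem abs_sum_Ico_sawtooth_div_add_le {N a b : ℕ} (hN : 0 < N) (ha : N ≤ a) (hb : b ≤ 2 * N) :
    |∑ k ∈ Ico a b, sawtooth (y / (k + θ) + c)|
      ≤ 61 * (y ^ ((1 : ℝ) / 3) + √(N ^ 3 / y)) := by
  have hN' : (0 : ℝ) < N := Nat.cast_pos.2 hN
  have hs₀ : 0 < y ^ ((1 : ℝ) / 3) := Real.rpow_pos_of_pos hy _
  have hs : (y ^ ((1 : ℝ) / 3)) ^ 3 = y := rpow_one_third_pow_three hy.le
  set s := y ^ ((1 : ℝ) / 3)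
  have hcard : (#(Ico a b) : ℝ) ≤ N := by
    rw [Nat.card_Ico, Nat.cast_le]
    omega
  have hsqrt : √(y / N) / √(s / N) = s := by
    rw [← Real.sqrt_div (by positivity), div_div_div_cancel_right₀ hN'.ne', ← hs, pow_succ,
      mul_div_cancel_right₀ _ hs₀.ne', Real.sqrt_sq hs₀.le]
  calc |∑ k ∈ Ico a b, sawtooth (y / (k + θ) + c)|
      ≤ #(Ico a b) * (s / N) / 2 + 3 * (20 * √(y / N) / √(s / N) + 20 * √(N ^ 3 / y)) :=
        abs_sum_sawtooth_le (by positivity) (by positivity) (by positivity) fun _ hh =>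
          norm_sum_fourierChar_mul_div_add_le hy hθ c hN ha hb hh
    _ ≤ N * (s / N) / 2 + 3 * (20 * √(y / N) / √(s / N) + 20 * √(N ^ 3 / y)) := by gcongr
    _ = s / 2 + 60 * (s + √(N ^ 3 / y)) := by
        rw [mul_div_cancel₀ _ hN'.ne', mul_div_assoc 20, hsqrt]
        ring
    _ ≤ 61 * (s + √(N ^ 3 / y)) := by linarith [Real.sqrt_nonneg (N ^ 3 / y : ℝ)]

theorem abs_sum_Ico_one_sawtooth_div_add_le {K : ℕ} (j b : ℕ) (hbK : b ≤ K + 1)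
    (hbj : b ≤ 2 ^ j) :
    |∑ k ∈ Ico 1 b, sawtooth (y / (k + θ) + c)|
      ≤ j * (61 * (y ^ ((1 : ℝ) / 3) + √(K ^ 3 / y))) := by
  induction j generalizing b with
  | zero =>
    rw [Ico_eq_empty_of_le (by simpa using hbj), sum_empty, abs_zero, Nat.cast_zero, zero_mul]
  | succ j ih =>
    rcases le_or_gt b (2 ^ j) with h | h
    · refine (ih b hbK h).trans ?_
      gcongr
      exact j.le_succ
    have hpow : 1 ≤ 2 ^ j := Nat.one_le_two_pow
    have hpowK : ((2 ^ j : ℕ) : ℝ) ≤ K := Nat.cast_le.2 (by omega)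
    rw [← sum_Ico_consecutive _ hpow h.le, Nat.cast_succ, add_one_mul]
    refine (abs_add_le _ _).trans (add_le_add (ih _ (by omega) le_rfl) ?_)
    refine (abs_sum_Ico_sawtooth_div_add_le hy hθ c hpow le_rfl (by omega)).trans ?_
    gcongr

theorem abs_sum_Icc_sawtooth_div_add_le (K : ℕ) :
    |∑ k ∈ Icc 1 K, sawtooth (y / (k + θ) + c)|
      ≤ 122 * (1 + Real.log K) * (y ^ ((1 : ℝ) / 3) + √(K ^ 3 / y)) := by
  have hlog : ((Nat.log 2 K + 1 : ℕ) : ℝ) ≤ 2 * (1 + Real.log K) := by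
    have hlogb : (Nat.log 2 K : ℝ) ≤ Real.log K / Real.log 2 := Real.natLog_le_logb K 2
    have hlogK : 0 ≤ Real.log K := Real.log_natCast_nonneg K
    have hlog2 : Real.log K / Real.log 2 ≤ 2 * Real.log K := by
      rw [div_le_iff₀ (Real.log_pos one_lt_two)]
      nlinarith [Real.log_two_gt_d9]
    push_cast
    linarith
  calc |∑ k ∈ Icc 1 K, sawtooth (y / (k + θ) + c)|
      ≤ (Nat.log 2 K + 1 : ℕ) * (61 * (y ^ ((1 : ℝ) / 3) + √(K ^ 3 / y))) :=
        abs_sum_Ico_one_sawtooth_div_add_le hy hθ c _ (K + 1) le_rfl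
          (Nat.lt_pow_succ_log_self one_lt_two K)
    _ ≤ 2 * (1 + Real.log K) * (61 * (y ^ ((1 : ℝ) / 3) + √(K ^ 3 / y))) := by gcongr
    _ = 122 * (1 + Real.log K) * (y ^ ((1 : ℝ) / 3) + √(K ^ 3 / y)) := by ring

end SawtoothDiv

/-! ### Normalised divisor sums -/

/-- The normalised divisor sum `∑_{d ∣ m} a(d)/d`; for `a = λ` it is `β(m)/m`. -/
noncomputable def divisorSum (a : ℕ → ℝ) (m : ℕ) : ℝ := ∑ d ∈ m.divisors, a d / d

/-- The mean value `∑_{d ≥ 1} a(d)/d²` of `divisorSum a`; the term `d = 0` vanishes. -/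
noncomputable def divisorSumMean (a : ℕ → ℝ) : ℝ := ∑' d : ℕ, a d / d ^ 2

theorem divisorSum_eq_sum_ite (a : ℕ → ℝ) {m M : ℕ} (hm : m ≠ 0) (hM : m ≤ M) :
    divisorSum a m = ∑ d ∈ Icc 1 M, a d / d * if d ∣ m then 1 else 0 := by
  have hdiv : m.divisors = {d ∈ Icc 1 M | d ∣ m} := by
    ext d
    rw [Nat.mem_divisors, mem_filter, mem_Icc]
    exact ⟨fun h => ⟨⟨Nat.pos_of_dvd_of_pos h.1 (by omega),
      (Nat.le_of_dvd (by omega) h.1).trans hM⟩, h.1⟩, fun h => ⟨h.2, hm⟩⟩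
  simp only [divisorSum, hdiv, sum_filter, mul_ite, mul_one, mul_zero]

theorem sum_Icc_filter_dvd {R : Type*} [AddCommMonoid R] (q : ℕ → R) {d : ℕ} (hd : 0 < d) (M : ℕ) :
    ∑ m ∈ Icc 1 M with d ∣ m, q m = ∑ k ∈ Icc 1 (M / d), q (d * k) := by
  refine (sum_nbij' (d * ·) (· / d) ?_ ?_ ?_ ?_ fun k _ => rfl).symm
  · intro k hk
    rw [mem_Icc] at hk
    rw [mem_filter, mem_Icc, mul_comm]
    exact ⟨⟨Nat.mul_pos hk.1 hd, (Nat.le_div_iff_mul_le hd).1 hk.2⟩, dvd_mul_left _ _⟩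
  · intro m hm
    rw [mem_filter, mem_Icc] at hm
    rw [mem_Icc]
    exact ⟨Nat.div_pos (Nat.le_of_dvd hm.1.1 hm.2) hd, Nat.div_le_div_right hm.1.2⟩
  · exact fun k _ => Nat.mul_div_cancel_left k hd
  · exact fun m hm => Nat.mul_div_cancel' (mem_filter.1 hm).2

theorem sum_divisorSum_mul (a q : ℕ → ℝ) (M : ℕ) :
    ∑ m ∈ Icc 1 M, divisorSum a m * q m
      = ∑ d ∈ Icc 1 M, a d / d * ∑ k ∈ Icc 1 (M / d), q (d * k) := by
  have hexpand : ∀ m ∈ Icc 1 M, divisorSum a m * q m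
      = ∑ d ∈ Icc 1 M, a d / d * if d ∣ m then q m else 0 := fun m hm => by
    rw [mem_Icc] at hm
    rw [divisorSum_eq_sum_ite a (by omega) hm.2, sum_mul]
    exact sum_congr rfl fun d _ => by rw [mul_assoc, ite_mul, one_mul, zero_mul]
  rw [sum_congr rfl hexpand, sum_comm]
  refine sum_congr rfl fun d hd => ?_
  rw [← sum_Icc_filter_dvd q (mem_Icc.1 hd).1 M, ← mul_sum, sum_filter]

theorem sum_Icc_one_div_le_one_add_log (n : ℕ) :
    ∑ d ∈ Icc 1 n, 1 / (d : ℝ) ≤ 1 + Real.log n := by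
  have h := harmonic_le_one_add_log n
  rw [harmonic_eq_sum_Icc] at h
  push_cast at h
  simpa only [one_div] using h

theorem two_add_log_le_two_mul_sqrt {t : ℝ} (ht : 0 < t) : 2 + Real.log t ≤ 2 * √t := by
  have h := Real.log_le_sub_one_of_pos (Real.sqrt_pos.2 ht)
  rw [Real.log_sqrt ht.le] at h
  linarith

theorem tendsto_sum_Icc_one_tsum {f : ℕ → ℝ} (hf : Summable f) (h0 : f 0 = 0) :
    Tendsto (fun n => ∑ i ∈ Icc 1 n, f i) atTop (nhds (∑' i, f i)) := by
  refine (hf.hasSum.tendsto_sum_nat.comp (tendsto_add_atTop_nat 1)).congr fun n => ?_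
  rw [Function.comp_apply, range_eq_Ico, sum_eq_sum_Ico_succ_bot n.succ_pos, h0, zero_add]
  rfl

theorem sum_Icc_one_sub_sum_Icc_one (f : ℕ → ℝ) {D n : ℕ} (hn : D ≤ n) :
    ∑ i ∈ Icc 1 n, f i - ∑ i ∈ Icc 1 D, f i = ∑ i ∈ Ioc D n, f i :=
  sub_eq_of_eq_add' (sum_Ioc_consecutive f (Nat.zero_le D) hn).symm

theorem sum_Ioc_one_div_sq_le {D : ℕ} (hD : D ≠ 0) (n : ℕ) :
    ∑ d ∈ Ioc D n, 1 / (d : ℝ) ^ 2 ≤ 1 / (D : ℝ) := by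
  rcases le_total D n with hn | hn
  · simp only [one_div]
    linarith [sum_Ioc_inv_sq_le_sub (α := ℝ) hD hn, inv_nonneg.2 (Nat.cast_nonneg (α := ℝ) n)]
  · rw [Ioc_eq_empty_of_le hn, sum_empty]
    positivity

theorem abs_le_of_abs_sub_succ_le {u p : ℕ → ℝ} {M : ℕ} (hu : Tendsto u atTop (nhds 0))
    (hp : Tendsto p atTop (nhds 0)) (h : ∀ n ≥ M, |u n - u (n + 1)| ≤ p n - p (n + 1)) :
    |u M| ≤ p M := by
  have hpartial : ∀ n ≥ M, |u M - u n| ≤ p M - p n := fun n hn => by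
    induction n, hn using Nat.le_induction with
    | base => simp
    | succ n hn ih => linarith [abs_sub_le (u M) (u n) (u (n + 1)), h n hn]
  have hlim := le_of_tendsto_of_tendsto (hu.const_sub (u M)).abs (hp.const_sub (p M))
    ((eventually_ge_atTop M).mono hpartial)
  rwa [sub_zero, sub_zero] at hlim

theorem abs_mul_two_div_le_sub {e C : ℝ} (hC : 0 ≤ C) {M n : ℕ} (hM : M ≠ 0) (hn : M ≤ n)
    (he : |e| ≤ 2 * C * √(n + 1 : ℕ)) :
    |e * (2 / (((n : ℝ) + 1) * (n + 2) * (n + 3)))|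
      ≤ 4 * C / √M / (n + 2) - 4 * C / √M / (n + 3) := by
  have hroot : √M ≤ √(n + 1 : ℕ) := Real.sqrt_le_sqrt (by exact_mod_cast hn.trans n.le_succ)
  have hM0 : 0 < √M := Real.sqrt_pos.2 (by positivity)
  have hsq : √(n + 1 : ℕ) ^ 2 = (n : ℝ) + 1 := by
    rw [Real.sq_sqrt (by positivity), Nat.cast_succ]
  rw [abs_mul, abs_of_pos (by positivity : 0 < 2 / (((n : ℝ) + 1) * (n + 2) * (n + 3)))]
  calc |e| * (2 / (((n : ℝ) + 1) * (n + 2) * (n + 3)))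
      ≤ 2 * C * √(n + 1 : ℕ) * (2 / (((n : ℝ) + 1) * (n + 2) * (n + 3))) := by gcongr
    _ = 4 * C / √(n + 1 : ℕ) / ((n + 2) * (n + 3)) := by
        have : 0 < √(n + 1 : ℕ) := hM0.trans_le hroot
        rw [← hsq]
        field_simp
        ring
    _ ≤ 4 * C / √M / ((n + 2) * (n + 3)) := by gcongr
    _ = 4 * C / √M / (n + 2) - 4 * C / √M / (n + 3) := by
        field_simp
        ring

theorem abs_div_succ_mul_le {e C : ℝ} (hC : 0 ≤ C) {M : ℕ} (hM : M ≠ 0) (he : |e| ≤ 2 * C * √M) :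
    |e / (((M : ℝ) + 1) * (M + 2))| ≤ 2 * C / (M * √M) := by
  have hM0 : (0 : ℝ) < M := by positivity
  rw [abs_div, abs_of_pos (by positivity : 0 < ((M : ℝ) + 1) * (M + 2))]
  calc |e| / (((M : ℝ) + 1) * (M + 2)) ≤ 2 * C * √M / (M * M) := by gcongr <;> linarith
    _ = 2 * C / (M * √M) := by
        have := Real.sq_sqrt hM0.le
        field_simp
        linear_combination C * this

section BoundedCoefficients

variable {a : ℕ → ℝ} {C : ℝ} (ha : ∀ d, |a d| ≤ C)
include ha

theorem abs_sum_div_mul_le {q B : ℕ → ℝ} {S : Finset ℕ} (hq : ∀ d ∈ S, |q d| ≤ B d) :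
    |∑ d ∈ S, a d / d * q d| ≤ C * ∑ d ∈ S, 1 / (d : ℝ) * B d := by
  have hC : 0 ≤ C := (abs_nonneg _).trans (ha 0)
  rw [mul_sum]
  refine (abs_sum_le_sum_abs _ _).trans (sum_le_sum fun d hd => ?_)
  rw [abs_mul, abs_div, Nat.abs_cast, ← mul_assoc, mul_one_div]
  gcongr
  · exact ha d
  · exact hq d hd

theorem abs_divisorSum_le (m : ℕ) : |divisorSum a m| ≤ C * (1 + Real.log m) := by
  have hC : 0 ≤ C := (abs_nonneg _).trans (ha 0)
  rcases eq_or_ne m 0 with rfl | hm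
  · simpa [divisorSum] using hC
  · rw [divisorSum_eq_sum_ite a hm le_rfl]
    refine (abs_sum_div_mul_le ha (B := fun _ => 1) fun d _ => ?_).trans ?_
    · split_ifs <;> simp
    · simp only [mul_one]
      gcongr
      exact sum_Icc_one_div_le_one_add_log m

theorem abs_div_sq_le (d : ℕ) : |a d / (d : ℝ) ^ 2| ≤ C * (1 / (d : ℝ) ^ 2) := by
  rw [abs_div, abs_of_nonneg (sq_nonneg (d : ℝ)), mul_one_div]
  exact div_le_div_of_nonneg_right (ha d) (sq_nonneg _)

theorem summable_div_sq : Summable fun d : ℕ => a d / (d : ℝ) ^ 2 :=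
  ((Real.summable_one_div_nat_pow.2 one_lt_two).mul_left C).of_norm_bounded (abs_div_sq_le ha)

theorem abs_divisorSumMean_sub_le {D : ℕ} (hD : D ≠ 0) :
    |divisorSumMean a - ∑ d ∈ Icc 1 D, a d / d ^ 2| ≤ C / D := by
  have hC : 0 ≤ C := (abs_nonneg _).trans (ha 0)
  have hlim := ((tendsto_sum_Icc_one_tsum (summable_div_sq ha) (by simp)).sub_const
    (∑ d ∈ Icc 1 D, a d / (d : ℝ) ^ 2)).abs
  refine le_of_tendsto hlim ((eventually_ge_atTop D).mono fun n hn => ?_)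
  calc |∑ d ∈ Icc 1 n, a d / (d : ℝ) ^ 2 - ∑ d ∈ Icc 1 D, a d / (d : ℝ) ^ 2|
      ≤ ∑ d ∈ Ioc D n, C * (1 / (d : ℝ) ^ 2) := by
        rw [sum_Icc_one_sub_sum_Icc_one _ hn]
        exact (abs_sum_le_sum_abs _ _).trans (sum_le_sum fun d _ => abs_div_sq_le ha d)
    _ ≤ C / D := by
        rw [← mul_sum, ← mul_one_div]
        exact mul_le_mul_of_nonneg_left (sum_Ioc_one_div_sq_le hD n) hC

theorem abs_divisorSumMean_le : |divisorSumMean a| ≤ 2 * C := by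
  have h := abs_divisorSumMean_sub_le ha one_ne_zero
  simp only [Icc_self, sum_singleton, Nat.cast_one, one_pow, div_one] at h
  have h₁ := ha 1
  rw [abs_le] at *
  constructor <;> linarith

theorem abs_sum_divisorSum_sub_le (m : ℕ) :
    |∑ i ∈ Icc 1 m, divisorSum a i - divisorSumMean a * m| ≤ 2 * C * √m := by
  have hC : 0 ≤ C := (abs_nonneg _).trans (ha 0)
  rcases eq_or_ne m 0 with rfl | hm
  · simp
  have hm0 : (0 : ℝ) < m := by positivity
  have hswap := sum_divisorSum_mul a (fun _ => 1) m
  simp only [mul_one, sum_const, Nat.card_Icc, Nat.add_sub_cancel, nsmul_eq_mul] at hswap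
  have hsplit : ∑ i ∈ Icc 1 m, divisorSum a i - divisorSumMean a * m
      = ∑ d ∈ Icc 1 m, a d / d * (((m / d : ℕ) : ℝ) - m / d)
        - m * (divisorSumMean a - ∑ d ∈ Icc 1 m, a d / d ^ 2) := by
    simp only [hswap, mul_sub, mul_sum, sum_sub_distrib]
    rw [sum_congr rfl fun d _ => show a d / d * (m / d : ℝ) = m * (a d / d ^ 2) by ring]
    ring
  have hfloor : |∑ d ∈ Icc 1 m, a d / d * (((m / d : ℕ) : ℝ) - m / d)|
      ≤ C * ∑ d ∈ Icc 1 m, 1 / (d : ℝ) * 1 := by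
    refine abs_sum_div_mul_le ha fun d _ => ?_
    rw [← Nat.floor_div_eq_div (K := ℝ), abs_sub_comm, abs_of_nonneg (sub_nonneg.2
      (Nat.floor_le (by positivity)))]
    linarith [Nat.lt_floor_add_one ((m : ℝ) / d)]
  have htail : |m * (divisorSumMean a - ∑ d ∈ Icc 1 m, a d / d ^ 2)| ≤ C := by
    rw [abs_mul, Nat.abs_cast, ← le_div_iff₀' hm0]
    exact abs_divisorSumMean_sub_le ha hm
  calc |∑ i ∈ Icc 1 m, divisorSum a i - divisorSumMean a * m|
      ≤ C * ∑ d ∈ Icc 1 m, 1 / (d : ℝ) + C := by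
        simp only [mul_one] at hfloor
        rw [hsplit]
        exact (abs_sub _ _).trans (add_le_add hfloor htail)
    _ ≤ C * (2 + Real.log m) := by
        linarith [mul_le_mul_of_nonneg_left (sum_Icc_one_div_le_one_add_log m) hC]
    _ ≤ 2 * C * √m := by
        linarith [mul_le_mul_of_nonneg_left (two_add_log_le_two_mul_sqrt hm0) hC]

theorem summable_divisorSum_div :
    Summable fun m : ℕ => divisorSum a m / ((m : ℝ) * (m + 1)) := by
  have hC : 0 ≤ C := (abs_nonneg _).trans (ha 0)
  refine ((Real.summable_one_div_nat_rpow (p := 3 / 2)).2 (by norm_num)).mul_left (2 * C)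
    |>.of_norm_bounded fun m => ?_
  rcases eq_or_ne m 0 with rfl | hm
  · simp
  have hm0 : (0 : ℝ) < m := by positivity
  have hrpow : (m : ℝ) ^ (3 / 2 : ℝ) = m * √m := by
    rw [show (3 / 2 : ℝ) = 1 + 1 / 2 by norm_num, Real.rpow_add hm0, Real.rpow_one,
      Real.sqrt_eq_rpow]
  have hf : |divisorSum a m| ≤ 2 * C * √m := by
    linarith [abs_divisorSum_le ha m,
      mul_le_mul_of_nonneg_left (two_add_log_le_two_mul_sqrt hm0) hC]
  rw [Real.norm_eq_abs, abs_div, abs_of_pos (by positivity : 0 < (m : ℝ) * (m + 1)), hrpow]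
  calc |divisorSum a m| / ((m : ℝ) * (m + 1)) ≤ 2 * C * √m / ((m : ℝ) * m) := by
        gcongr
        linarith
    _ = 2 * C * (1 / (m * √m)) := by
        have := Real.sq_sqrt hm0.le
        field_simp
        linear_combination C * this

theorem tendsto_sum_divisorSum_sub_div :
    Tendsto (fun m : ℕ => (∑ i ∈ Icc 1 m, divisorSum a i - divisorSumMean a * m)
      / (((m : ℝ) + 1) * (m + 2))) atTop (nhds 0) := by
  have hC : 0 ≤ C := (abs_nonneg _).trans (ha 0)
  refine squeeze_zero_norm (a := fun m : ℕ => 2 * C * (1 / ((m : ℝ) + 1))) (fun m => ?_) (by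
    simpa only [mul_zero] using
      (tendsto_one_div_add_atTop_nhds_zero_nat (𝕜 := ℝ)).const_mul (2 * C))
  have hroot : √m ≤ (m : ℝ) + 2 := Real.sqrt_le_iff.2 ⟨by positivity, by nlinarith⟩
  rw [Real.norm_eq_abs, abs_div, abs_of_pos (by positivity : 0 < ((m : ℝ) + 1) * (m + 2))]
  calc |∑ i ∈ Icc 1 m, divisorSum a i - divisorSumMean a * m| / (((m : ℝ) + 1) * (m + 2))
      ≤ 2 * C * (m + 2) / (((m : ℝ) + 1) * (m + 2)) := by
        gcongr
        exact (abs_sum_divisorSum_sub_le ha m).trans (by gcongr)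
    _ = 2 * C * (1 / ((m : ℝ) + 1)) := by field_simp

theorem tendsto_tsum_divisorSum_sub_add :
    Tendsto (fun m : ℕ => ∑' i : ℕ, divisorSum a i / ((i : ℝ) * (i + 1))
        - ∑ i ∈ Icc 1 m, divisorSum a i / ((i : ℝ) * (i + 1)) - divisorSumMean a / (m + 1)
        + (∑ i ∈ Icc 1 m, divisorSum a i - divisorSumMean a * m) / (((m : ℝ) + 1) * (m + 2)))
      atTop (nhds 0) := by
  have hseries := (tendsto_sum_Icc_one_tsum (summable_divisorSum_div ha)
    (by simp)).const_sub (∑' i : ℕ, divisorSum a i / ((i : ℝ) * (i + 1)))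
  have hmean := (tendsto_one_div_add_atTop_nhds_zero_nat (𝕜 := ℝ)).const_mul (divisorSumMean a)
  simpa only [sub_self, mul_zero, add_zero, mul_one_div] using
    (hseries.sub hmean).add (tendsto_sum_divisorSum_sub_div ha)

theorem abs_tsum_divisorSum_sub_le {M : ℕ} (hM : M ≠ 0) :
    |∑' m : ℕ, divisorSum a m / ((m : ℝ) * (m + 1))
        - ∑ m ∈ Icc 1 M, divisorSum a m / ((m : ℝ) * (m + 1))
        - divisorSumMean a / (M + 1)| ≤ 6 * C / (M * √M) := by
  have hC : 0 ≤ C := (abs_nonneg _).trans (ha 0)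
  set w : ℕ → ℝ := fun m => divisorSum a m / ((m : ℝ) * (m + 1)) with hw
  set E : ℕ → ℝ := fun m => ∑ i ∈ Icc 1 m, divisorSum a i - divisorSumMean a * m with hE
  -- Partial summation turns the tail into a series over `E` with weights `2/(m(m+1)(m+2))`.
  set u : ℕ → ℝ := fun m => ∑' i, w i - ∑ i ∈ Icc 1 m, w i - divisorSumMean a / (m + 1)
    + E m / (((m : ℝ) + 1) * (m + 2)) with hu
  have hstep (n : ℕ) : u n - u (n + 1) = E (n + 1) * (2 / (((n : ℝ) + 1) * (n + 2) * (n + 3))) := by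
    simp only [hu, hE, hw, sum_Icc_succ_top (Nat.le_add_left 1 n)]
    push_cast
    field_simp
    ring
  have hulim : Tendsto u atTop (nhds 0) := tendsto_tsum_divisorSum_sub_add ha
  have hplim : Tendsto (fun n : ℕ => 4 * C / √M / ((n : ℝ) + 2)) atTop (nhds 0) :=
    (tendsto_natCast_atTop_atTop.atTop_add tendsto_const_nhds).const_div_atTop _
  have huM := abs_le_of_abs_sub_succ_le hulim hplim fun n hn => by
    rw [hstep]
    refine (abs_mul_two_div_le_sub hC hM hn (abs_sum_divisorSum_sub_le ha _)).trans_eq ?_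
    push_cast
    ring
  calc |∑' i, w i - ∑ i ∈ Icc 1 M, w i - divisorSumMean a / (M + 1)|
      = |u M - E M / (((M : ℝ) + 1) * (M + 2))| := by rw [hu, add_sub_cancel_right]
    _ ≤ 4 * C / √M / (M + 2) + 2 * C / (M * √M) :=
        (abs_sub _ _).trans (add_le_add huM
          (abs_div_succ_mul_le hC hM (abs_sum_divisorSum_sub_le ha M)))
    _ ≤ 4 * C / √M / M + 2 * C / (M * √M) := by
        gcongr
        linarith
    _ = 6 * C / (M * √M) := by
        field_simp
        ring

end BoundedCoefficients

/-! ### The floor function at `x / n` -/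

theorem natCast_floor_eq_sub_sawtooth {t : ℝ} (ht : 0 ≤ t) :
    (⌊t⌋₊ : ℝ) = t - 1 / 2 - sawtooth t := by
  rw [natCast_floor_eq_intCast_floor ht, sawtooth, ← Int.self_sub_floor]
  ring

theorem natFloor_div_eq_of_mem_Ioc {x : ℝ} (hx : 0 ≤ x) {m n : ℕ} (hm : m ≠ 0)
    (hn : n ∈ Ioc ⌊x / (m + 1 : ℕ)⌋₊ ⌊x / m⌋₊) : ⌊x / n⌋₊ = m := by
  have hn0 : (0 : ℝ) < n := Nat.cast_pos.2 (Nat.zero_lt_of_lt (mem_Ioc.1 hn).1)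
  rw [mem_Ioc, Nat.floor_lt (by positivity), Nat.le_floor_iff (by positivity),
    div_lt_comm₀ (by positivity) hn0, le_div_comm₀ hn0 (by positivity), Nat.cast_succ] at hn
  exact (Nat.floor_eq_iff (by positivity)).2 hn.symm

theorem sum_natFloor_div_eq (f : ℕ → ℝ) {x : ℝ} (hx : 0 ≤ x) (M : ℕ) :
    ∑ n ∈ Icc 1 ⌊x⌋₊, f ⌊x / n⌋₊ = ∑ n ∈ Icc 1 ⌊x / (M + 1 : ℕ)⌋₊, f ⌊x / n⌋₊
      + ∑ m ∈ Icc 1 M, f m * ((⌊x / m⌋₊ : ℝ) - ⌊x / (m + 1 : ℕ)⌋₊) := by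
  induction M with
  | zero => simp
  | succ M ih =>
    have hle : ⌊x / (M + 1 + 1 : ℕ)⌋₊ ≤ ⌊x / (M + 1 : ℕ)⌋₊ := by
      gcongr
      omega
    have hblock := sum_Icc_one_sub_sum_Icc_one (fun n : ℕ => f ⌊x / n⌋₊) hle
    rw [sum_congr rfl fun n hn => congrArg f (natFloor_div_eq_of_mem_Ioc hx M.succ_ne_zero hn),
      sum_const, Nat.card_Ioc, nsmul_eq_mul, Nat.cast_sub hle] at hblock
    rw [ih, sum_Icc_succ_top (by omega)]
    linear_combination hblock

theorem sum_natFloor_div_eq_add_sum_sawtooth (f : ℕ → ℝ) {x : ℝ} (hx : 0 ≤ x) (M : ℕ) :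
    ∑ n ∈ Icc 1 ⌊x⌋₊, f ⌊x / n⌋₊ = ∑ n ∈ Icc 1 ⌊x / (M + 1 : ℕ)⌋₊, f ⌊x / n⌋₊
      + x * ∑ m ∈ Icc 1 M, f m / (m * (m + 1))
      + ∑ m ∈ Icc 1 M, f m * (sawtooth (x / (m + 1 : ℕ)) - sawtooth (x / m)) := by
  rw [sum_natFloor_div_eq f hx M, add_assoc, mul_sum, ← sum_add_distrib]
  congr 1
  refine sum_congr rfl fun m hm => ?_
  have hm0 : (m : ℝ) ≠ 0 := Nat.cast_ne_zero.2 (Nat.one_le_iff_ne_zero.1 (mem_Icc.1 hm).1)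
  have hdiff : x / m - x / (m + 1 : ℕ) = x / (m * (m + 1)) := by
    push_cast
    field_simp
    ring
  rw [natCast_floor_eq_sub_sawtooth (by positivity), natCast_floor_eq_sub_sawtooth (by positivity)]
  linear_combination f m * hdiff

theorem sum_natFloor_div_sub_mul_eq (f : ℕ → ℝ) (c S : ℝ) {x : ℝ} (hx : 0 ≤ x) (M : ℕ) :
    ∑ n ∈ Icc 1 ⌊x⌋₊, f ⌊x / n⌋₊ - x * S
      = (∑ n ∈ Icc 1 ⌊x / (M + 1 : ℕ)⌋₊, f ⌊x / n⌋₊ - c * ⌊x / (M + 1 : ℕ)⌋₊)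
        + ∑ m ∈ Icc 1 M, f m * (sawtooth (x / (m + 1 : ℕ)) - sawtooth (x / m))
        - x * (S - ∑ m ∈ Icc 1 M, f m / (m * (m + 1)) - c / (M + 1))
        + c * (⌊x / (M + 1 : ℕ)⌋₊ - x / (M + 1 : ℕ)) := by
  rw [sum_natFloor_div_eq_add_sum_sawtooth f hx M, Nat.cast_succ]
  ring

theorem ite_dvd_natFloor_eq {t : ℝ} (ht : 1 ≤ t) {d : ℕ} (hd : d ≠ 0) :
    (if d ∣ ⌊t⌋₊ then (1 : ℝ) else 0)
      = 1 / d + sawtooth ((t - 1) / d) - sawtooth (t / d) := by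
  have hpos : 1 ≤ ⌊t⌋₊ := Nat.one_le_floor_iff _ |>.2 ht
  have hsucc := Nat.succ_div (a := ⌊t⌋₊ - 1) (b := d)
  rw [Nat.sub_add_cancel hpos, ← Nat.floor_sub_one, ← Nat.floor_div_natCast,
    ← Nat.floor_div_natCast] at hsucc
  have hcast := congrArg (Nat.cast (R := ℝ)) hsucc
  rw [Nat.cast_add, Nat.cast_ite, natCast_floor_eq_sub_sawtooth (by positivity),
    natCast_floor_eq_sub_sawtooth (div_nonneg (sub_nonneg.2 ht) d.cast_nonneg)] at hcast
  push_cast at hcast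
  linear_combination -hcast

/-- The constant `ζ(4/3)`, with which `∑ d⁻¹ (x/d)^{1/3}` is bounded. -/
noncomputable def zetaFourThirds : ℝ := ∑' d : ℕ, 1 / (d : ℝ) ^ ((4 : ℝ) / 3)

theorem zetaFourThirds_nonneg : 0 ≤ zetaFourThirds := tsum_nonneg fun _ => by positivity

theorem sum_one_div_rpow_le_zetaFourThirds (S : Finset ℕ) :
    ∑ d ∈ S, 1 / (d : ℝ) ^ ((4 : ℝ) / 3) ≤ zetaFourThirds :=
  (Real.summable_one_div_nat_rpow.2 (by norm_num)).sum_le_tsum S fun _ _ => by positivity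

theorem sum_one_div_mul_div_rpow_le {x : ℝ} (hx : 0 ≤ x) (D : ℕ) :
    ∑ d ∈ Icc 1 D, 1 / (d : ℝ) * (x / d) ^ ((1 : ℝ) / 3)
      ≤ zetaFourThirds * x ^ ((1 : ℝ) / 3) := by
  refine le_of_eq_of_le ?_ (mul_le_mul_of_nonneg_right
    (sum_one_div_rpow_le_zetaFourThirds (Icc 1 D)) (Real.rpow_nonneg hx _))
  rw [sum_mul]
  refine sum_congr rfl fun d hd => ?_
  have hd0 : (0 : ℝ) < d := Nat.cast_pos.2 (mem_Icc.1 hd).1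
  rw [Real.div_rpow hx hd0.le, show (4 : ℝ) / 3 = 1 + 1 / 3 by norm_num, Real.rpow_add hd0,
    Real.rpow_one]
  field_simp

theorem sum_one_div_sq_le_zetaFourThirds (D : ℕ) :
    ∑ d ∈ Icc 1 D, 1 / (d : ℝ) ^ 2 ≤ zetaFourThirds := by
  refine (sum_le_sum fun d hd => ?_).trans (sum_one_div_rpow_le_zetaFourThirds (Icc 1 D))
  have hd1 : (1 : ℝ) ≤ d := Nat.one_le_cast.2 (mem_Icc.1 hd).1
  refine one_div_le_one_div_of_le (by positivity) ?_
  rw [← Real.rpow_natCast]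
  exact Real.rpow_le_rpow_of_exponent_le hd1 (by norm_num)

theorem sum_one_div_sqrt_le (D : ℕ) : ∑ d ∈ Icc 1 D, 1 / √(d : ℝ) ≤ 2 * √D := by
  induction D with
  | zero => simp
  | succ D ih =>
    rw [sum_Icc_succ_top (by omega)]
    have hpos : 0 < √(D + 1 : ℕ) := Real.sqrt_pos.2 (by positivity)
    have hsq : √(D + 1 : ℕ) ^ 2 = √D ^ 2 + 1 := by
      rw [Real.sq_sqrt D.cast_nonneg, Real.sq_sqrt (D + 1).cast_nonneg, Nat.cast_succ]
    have hstep : 1 / √(D + 1 : ℕ) ≤ 2 * √(D + 1 : ℕ) - 2 * √D := by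
      rw [div_le_iff₀ hpos]
      linarith [sq_nonneg (√(D + 1 : ℕ) - √D)]
    linarith

theorem abs_sum_sawtooth_div_mul_add_one_sub_le {x : ℝ} (hx : 0 < x) {d M : ℕ}
    (hd : d ∈ Icc 1 M) :
    |∑ k ∈ Icc 1 (M / d), (sawtooth (x / (d * k + 1 : ℕ)) - sawtooth (x / (d * k : ℕ)))|
      ≤ 244 * (1 + Real.log M) * ((x / d) ^ ((1 : ℝ) / 3) + √(M ^ 3 / x) * (1 / d)) := by
  rw [mem_Icc] at hd
  have hd1 : (1 : ℝ) ≤ d := Nat.one_le_cast.2 hd.1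
  have hd0 : (0 : ℝ) < d := by linarith
  have hlog : Real.log (M / d : ℕ) ≤ Real.log M :=
    Real.log_le_log (Nat.cast_pos.2 (Nat.div_pos hd.2 hd.1)) (Nat.cast_le.2 (Nat.div_le_self M d))
  have hroot : √((M / d : ℕ) ^ 3 / (x / d)) ≤ √(M ^ 3 / x) * (1 / d) := by
    rw [Real.sqrt_le_left (by positivity), mul_pow, Real.sq_sqrt (by positivity)]
    calc ((M / d : ℕ) : ℝ) ^ 3 / (x / d) ≤ (M / d) ^ 3 / (x / d) := by
          gcongr
          exact Nat.cast_div_le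
      _ = M ^ 3 / x * (1 / d) ^ 2 := by field_simp
  have hθ : ∀ θ ∈ Set.Icc (0 : ℝ) 1, |∑ k ∈ Icc 1 (M / d), sawtooth (x / d / (k + θ) + 0)|
      ≤ 122 * (1 + Real.log M) * ((x / d) ^ ((1 : ℝ) / 3) + √(M ^ 3 / x) * (1 / d)) :=
    fun θ hθ => (abs_sum_Icc_sawtooth_div_add_le (div_pos hx hd0) hθ 0 _).trans (by
      have := Real.log_natCast_nonneg (M / d)
      gcongr)
  have hshift := hθ (1 / d) ⟨by positivity, (div_le_one hd0).2 hd1⟩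
  have hzero := hθ 0 ⟨le_rfl, zero_le_one⟩
  rw [sum_congr rfl fun (k : ℕ) _ => show sawtooth (x / d / (k + 1 / d) + 0)
    = sawtooth (x / (d * k + 1 : ℕ)) by push_cast; congr 1; field_simp; ring] at hshift
  rw [sum_congr rfl fun (k : ℕ) _ => show sawtooth (x / d / (k + 0) + 0)
    = sawtooth (x / (d * k : ℕ)) by push_cast; rw [add_zero, add_zero, div_div]] at hzero
  rw [sum_sub_distrib]
  exact (abs_sub _ _).trans (by linarith)

theorem abs_sum_sawtooth_div_sub_one_div_sub_le {x : ℝ} (hx : 0 < x) {d : ℕ} (hd : d ≠ 0) (N : ℕ) :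
    |∑ n ∈ Icc 1 N, (sawtooth ((x / n - 1) / d) - sawtooth (x / n / d))|
      ≤ 244 * (1 + Real.log N) * ((x / d) ^ ((1 : ℝ) / 3) + √(N ^ 3 / x) * √d) := by
  have hroot : √(N ^ 3 / (x / d)) = √(N ^ 3 / x) * √d := by
    rw [← Real.sqrt_mul (by positivity), div_div_eq_mul_div, div_mul_eq_mul_div]
  have hc (c : ℝ) : |∑ n ∈ Icc 1 N, sawtooth (x / n / d + c)|
      ≤ 122 * (1 + Real.log N) * ((x / d) ^ ((1 : ℝ) / 3) + √(N ^ 3 / x) * √d) := by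
    have h := abs_sum_Icc_sawtooth_div_add_le (y := x / d) (θ := 0) (by positivity)
      ⟨le_rfl, zero_le_one⟩ c N
    simpa only [hroot, add_zero, div_right_comm x] using h
  have hshift := hc (-(1 / d))
  have hzero := hc 0
  simp only [← sub_eq_add_neg, ← sub_div] at hshift
  simp only [add_zero] at hzero
  rw [sum_sub_distrib]
  exact (abs_sub _ _).trans (by linarith)

theorem divisorSum_eq_sum_Icc_add_divisorSum_indicator (a : ℕ → ℝ) {m : ℕ} (hm : m ≠ 0) (D : ℕ) :
    divisorSum a m = ∑ d ∈ Icc 1 D, a d / d * (if d ∣ m then 1 else 0)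
      + divisorSum ((Set.Ioi D).indicator a) m := by
  have hsmall : {d ∈ m.divisors | d ≤ D} = {d ∈ Icc 1 D | d ∣ m} := by
    ext d
    rw [mem_filter, mem_filter, mem_Icc, Nat.mem_divisors]
    exact ⟨fun h => ⟨⟨Nat.pos_of_dvd_of_pos h.1.1 (by omega), h.2⟩, h.1.1⟩,
      fun h => ⟨⟨h.2, hm⟩, h.1.2⟩⟩
  simp only [divisorSum, Set.indicator_apply, Set.mem_Ioi, ite_div, zero_div, mul_ite, mul_one,
    mul_zero, ← sum_filter]
  rw [← hsmall, ← sum_filter_add_sum_filter_not m.divisors (· ≤ D)]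
  simp only [not_le]

theorem divisorSum_natFloor_eq (a : ℕ → ℝ) {t : ℝ} (ht : 1 ≤ t) (D : ℕ) :
    divisorSum a ⌊t⌋₊
      = ∑ d ∈ Icc 1 D, a d / d * (1 / d + (sawtooth ((t - 1) / d) - sawtooth (t / d)))
        + divisorSum ((Set.Ioi D).indicator a) ⌊t⌋₊ := by
  rw [divisorSum_eq_sum_Icc_add_divisorSum_indicator a (Nat.floor_pos.2 ht).ne' D]
  congr 1
  exact sum_congr rfl fun d hd => by
    rw [ite_dvd_natFloor_eq ht (Nat.one_le_iff_ne_zero.1 (mem_Icc.1 hd).1), add_sub_assoc]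

theorem sum_divisorSum_natFloor_div_eq (a : ℕ → ℝ) {x : ℝ} {N : ℕ} (hN : (N : ℝ) ≤ x) (D : ℕ) :
    ∑ n ∈ Icc 1 N, divisorSum a ⌊x / n⌋₊
      = (∑ d ∈ Icc 1 D, a d / d ^ 2) * N
        + ∑ d ∈ Icc 1 D, a d / d *
          ∑ n ∈ Icc 1 N, (sawtooth ((x / n - 1) / d) - sawtooth (x / n / d))
        + ∑ n ∈ Icc 1 N, divisorSum ((Set.Ioi D).indicator a) ⌊x / n⌋₊ := by
  have hxn : ∀ n ∈ Icc 1 N, 1 ≤ x / n := fun n hn => by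
    rw [mem_Icc] at hn
    exact (one_le_div₀ (Nat.cast_pos.2 hn.1)).2 ((Nat.cast_le.2 hn.2).trans hN)
  rw [sum_congr rfl fun n hn => divisorSum_natFloor_eq a (hxn n hn) D, sum_add_distrib, sum_comm,
    sum_mul, ← sum_add_distrib]
  congr 1
  refine sum_congr rfl fun d _ => ?_
  rw [← mul_sum, sum_add_distrib, sum_const, Nat.card_Icc, Nat.add_sub_cancel, nsmul_eq_mul]
  ring

theorem sum_divisorSum_indicator_Ioi_le {D : ℕ} (hD : D ≠ 0) (Y : ℕ) :
    ∑ m ∈ Icc 1 Y, divisorSum ((Set.Ioi D).indicator 1) m ≤ (Y : ℝ) / D := by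
  have hswap := sum_divisorSum_mul ((Set.Ioi D).indicator 1) (fun _ => 1) Y
  simp only [mul_one, sum_const, Nat.card_Icc, Nat.add_sub_cancel, nsmul_eq_mul] at hswap
  rw [hswap]
  calc ∑ d ∈ Icc 1 Y, (Set.Ioi D).indicator 1 d / (d : ℝ) * (Y / d : ℕ)
      = ∑ d ∈ Ioc D Y, 1 / (d : ℝ) * (Y / d : ℕ) := by
        have hIoc : Ioc D Y = {d ∈ Icc 1 Y | D < d} := by
          ext d
          simp only [mem_Ioc, mem_filter, mem_Icc]
          omega
        simp only [hIoc, sum_filter, Set.indicator_apply, Set.mem_Ioi, Pi.one_apply, ite_div,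
          zero_div, ite_mul, zero_mul]
    _ ≤ ∑ d ∈ Ioc D Y, Y * (1 / (d : ℝ) ^ 2) := sum_le_sum fun d _ => by
        calc 1 / (d : ℝ) * (Y / d : ℕ) ≤ 1 / (d : ℝ) * (Y / d) := by
              gcongr
              exact Nat.cast_div_le
          _ = Y * (1 / (d : ℝ) ^ 2) := by ring
    _ ≤ Y / D := by
        rw [← mul_sum, ← mul_one_div (Y : ℝ)]
        exact mul_le_mul_of_nonneg_left (sum_Ioc_one_div_sq_le hD Y) Y.cast_nonneg

theorem divisorSum_indicator_one_nonneg (s : Set ℕ) (m : ℕ) : 0 ≤ divisorSum (s.indicator 1) m :=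
  sum_nonneg fun d _ => div_nonneg (Set.indicator_nonneg (fun _ _ => zero_le_one) d) d.cast_nonneg

theorem strictAntiOn_natFloor_div {x : ℝ} {N : ℕ} (hN : (N : ℝ) ^ 2 ≤ x) :
    StrictAntiOn (fun n : ℕ => ⌊x / n⌋₊) (Set.Icc 1 N) := by
  intro n hn k hk hnk
  have hn0 : (0 : ℝ) < n := Nat.cast_pos.2 hn.1
  have hnk' : (n : ℝ) + 1 ≤ k := by exact_mod_cast hnk
  have hk0 : (0 : ℝ) < k := by linarith
  have hkN : (k : ℝ) ≤ N := Nat.cast_le.2 hk.2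
  have hx0 : 0 ≤ x := (sq_nonneg _).trans hN
  beta_reduce
  rw [← Nat.add_one_le_iff, ← Nat.floor_add_one (by positivity)]
  apply Nat.floor_le_floor
  rw [div_add_one hk0.ne', div_le_div_iff₀ hk0 hn0]
  nlinarith

theorem sum_Ioc_divisorSum_indicator_Ioi_natFloor_div_le {x : ℝ} {D N : ℕ} (hD : D ≠ 0)
    (hN : (N : ℝ) ^ 2 ≤ x) :
    ∑ n ∈ Ioc D N, divisorSum ((Set.Ioi D).indicator 1) ⌊x / n⌋₊ ≤ x / D ^ 2 := by
  have hx0 : 0 ≤ x := (sq_nonneg _).trans hN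
  have hD0 : (0 : ℝ) < D := by positivity
  have hinj : Set.InjOn (fun n : ℕ => ⌊x / n⌋₊) (Ioc D N) :=
    (strictAntiOn_natFloor_div hN).injOn.mono fun n hn => by
      rw [coe_Ioc, Set.mem_Ioc] at hn
      exact ⟨by omega, hn.2⟩
  have himage : (Ioc D N).image (fun n : ℕ => ⌊x / n⌋₊) ⊆ Icc 1 ⌊x / D⌋₊ := by
    refine image_subset_iff.2 fun n hn => ?_
    rw [mem_Ioc] at hn
    have hDn : (D : ℝ) ≤ n := Nat.cast_le.2 hn.1.le
    have hn1 : (1 : ℝ) ≤ n := Nat.one_le_cast.2 (by omega)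
    have hnN : (n : ℝ) ≤ N := Nat.cast_le.2 hn.2
    rw [mem_Icc, Nat.one_le_floor_iff, one_le_div₀ (by linarith)]
    exact ⟨by nlinarith, by gcongr⟩
  calc ∑ n ∈ Ioc D N, divisorSum ((Set.Ioi D).indicator 1) ⌊x / n⌋₊
      = ∑ m ∈ (Ioc D N).image (fun n : ℕ => ⌊x / n⌋₊), divisorSum ((Set.Ioi D).indicator 1) m :=
        (sum_image hinj).symm
    _ ≤ ∑ m ∈ Icc 1 ⌊x / D⌋₊, divisorSum ((Set.Ioi D).indicator 1) m :=
        sum_le_sum_of_subset_of_nonneg himage fun m _ _ => divisorSum_indicator_one_nonneg _ m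
    _ ≤ (⌊x / D⌋₊ : ℝ) / D := sum_divisorSum_indicator_Ioi_le hD _
    _ ≤ x / D / D := by
        gcongr
        exact Nat.floor_le (by positivity)
    _ = x / D ^ 2 := by rw [div_div, sq]

theorem log_natCast_le_log {y : ℝ} (hy : 1 ≤ y) {n : ℕ} (hn : (n : ℝ) ≤ y) :
    Real.log n ≤ Real.log y := by
  rcases Nat.eq_zero_or_pos n with rfl | hpos
  · simpa using Real.log_nonneg hy
  · exact Real.log_le_log (Nat.cast_pos.2 hpos) hn

theorem sum_divisorSum_indicator_Ioi_natFloor_div_le {x : ℝ} (hx : 1 ≤ x) {D N : ℕ} (hD : D ≠ 0)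
    (hN : (N : ℝ) ^ 2 ≤ x) :
    ∑ n ∈ Icc 1 N, divisorSum ((Set.Ioi D).indicator 1) ⌊x / n⌋₊
      ≤ D * (1 + Real.log x) + x / D ^ 2 := by
  have hone : ∀ d, |(Set.Ioi D).indicator (1 : ℕ → ℝ) d| ≤ 1 := fun d => by
    rw [Set.indicator_apply]
    split_ifs <;> simp
  have hterm : ∀ n ∈ Icc 1 D, divisorSum ((Set.Ioi D).indicator 1) ⌊x / n⌋₊ ≤ 1 + Real.log x := by
    intro n hn
    have hn1 : (1 : ℝ) ≤ n := Nat.one_le_cast.2 (mem_Icc.1 hn).1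
    refine (le_abs_self _).trans ((abs_divisorSum_le hone _).trans ?_)
    linarith [log_natCast_le_log hx
      ((Nat.floor_le (by positivity)).trans (div_le_self (by linarith) hn1) : (⌊x / n⌋₊ : ℝ) ≤ x)]
  calc ∑ n ∈ Icc 1 N, divisorSum ((Set.Ioi D).indicator 1) ⌊x / n⌋₊
      ≤ ∑ n ∈ Icc 1 D ∪ Ioc D N, divisorSum ((Set.Ioi D).indicator 1) ⌊x / n⌋₊ :=
        sum_le_sum_of_subset_of_nonneg (fun n hn => by
          simp only [mem_Icc, mem_union, mem_Ioc] at hn ⊢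
          omega) fun n _ _ => divisorSum_indicator_one_nonneg _ _
    _ = ∑ n ∈ Icc 1 D, divisorSum ((Set.Ioi D).indicator 1) ⌊x / n⌋₊
        + ∑ n ∈ Ioc D N, divisorSum ((Set.Ioi D).indicator 1) ⌊x / n⌋₊ :=
        sum_union (disjoint_left.2 fun n h h' => by
          rw [mem_Icc] at h
          rw [mem_Ioc] at h'
          omega)
    _ ≤ D * (1 + Real.log x) + x / D ^ 2 := by
        refine add_le_add ?_ (sum_Ioc_divisorSum_indicator_Ioi_natFloor_div_le hD hN)
        exact (sum_le_card_nsmul _ _ _ hterm).trans_eq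
          (by rw [Nat.card_Icc, nsmul_eq_mul, Nat.add_sub_cancel])

theorem pow_nine_rpow_one_third {z : ℝ} (hz : 0 ≤ z) : (z ^ 9) ^ ((1 : ℝ) / 3) = z ^ 3 := by
  rw [show z ^ 9 = (z ^ 3) ^ 3 by ring, one_div]
  exact_mod_cast Real.pow_rpow_inv_natCast (pow_nonneg hz 3) three_ne_zero

theorem half_le_natFloor {t : ℝ} (ht : 1 ≤ t) : t / 2 ≤ ⌊t⌋₊ := by
  linarith [Nat.lt_floor_add_one t, Nat.one_le_cast (α := ℝ).2 (Nat.floor_pos.2 ht)]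

theorem sqrt_div_pow_nine_mul_sqrt_floor_le {z : ℝ} (hz : 0 < z) {N : ℕ} (hN : (N : ℝ) ≤ z ^ 4) :
    √(N ^ 3 / z ^ 9) * (2 * √⌊z ^ 3⌋₊) ≤ 2 * z ^ 3 :=
  calc √(N ^ 3 / z ^ 9) * (2 * √⌊z ^ 3⌋₊) ≤ √((z ^ 4) ^ 3 / z ^ 9) * (2 * √(z ^ 3)) := by
        gcongr
        exact Nat.floor_le (by positivity)
    _ = 2 * √(z ^ 3) ^ 2 := by
        rw [show (z ^ 4) ^ 3 / z ^ 9 = z ^ 3 by field_simp]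
        ring
    _ = 2 * z ^ 3 := by rw [Real.sq_sqrt (by positivity)]

section BoundedCoefficients

variable {a : ℕ → ℝ} {C : ℝ} (ha : ∀ d, |a d| ≤ C)
include ha

theorem abs_sum_divisorSum_mul_sawtooth_sub_le {x : ℝ} (hx : 0 < x) (M : ℕ) :
    |∑ m ∈ Icc 1 M, divisorSum a m * (sawtooth (x / (m + 1 : ℕ)) - sawtooth (x / m))|
      ≤ 244 * C * zetaFourThirds * (1 + Real.log M) * (x ^ ((1 : ℝ) / 3) + √(M ^ 3 / x)) := by
  have hC : 0 ≤ C := (abs_nonneg _).trans (ha 0)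
  rw [sum_divisorSum_mul a fun m => sawtooth (x / (m + 1 : ℕ)) - sawtooth (x / m)]
  refine (abs_sum_div_mul_le ha fun d hd => abs_sum_sawtooth_div_mul_add_one_sub_le hx hd).trans ?_
  calc C * ∑ d ∈ Icc 1 M, 1 / (d : ℝ) *
        (244 * (1 + Real.log M) * ((x / d) ^ ((1 : ℝ) / 3) + √(M ^ 3 / x) * (1 / d)))
      = 244 * C * (1 + Real.log M) * (∑ d ∈ Icc 1 M, 1 / (d : ℝ) * (x / d) ^ ((1 : ℝ) / 3)
        + √(M ^ 3 / x) * ∑ d ∈ Icc 1 M, 1 / (d : ℝ) ^ 2) := by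
        simp only [mul_sum, ← sum_add_distrib]
        exact sum_congr rfl fun d _ => by ring
    _ ≤ 244 * C * (1 + Real.log M) * (zetaFourThirds * x ^ ((1 : ℝ) / 3)
        + √(M ^ 3 / x) * zetaFourThirds) := by
        gcongr
        · exact sum_one_div_mul_div_rpow_le hx.le M
        · exact sum_one_div_sq_le_zetaFourThirds M
    _ = 244 * C * zetaFourThirds * (1 + Real.log M) * (x ^ ((1 : ℝ) / 3) + √(M ^ 3 / x)) := by ring

theorem abs_sum_div_mul_sawtooth_sub_le {x : ℝ} (hx : 0 < x) (D N : ℕ) :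
    |∑ d ∈ Icc 1 D, a d / d *
        ∑ n ∈ Icc 1 N, (sawtooth ((x / n - 1) / d) - sawtooth (x / n / d))|
      ≤ 244 * C * (1 + Real.log N)
        * (zetaFourThirds * x ^ ((1 : ℝ) / 3) + √(N ^ 3 / x) * (2 * √D)) := by
  have hC : 0 ≤ C := (abs_nonneg _).trans (ha 0)
  refine (abs_sum_div_mul_le ha fun d hd => abs_sum_sawtooth_div_sub_one_div_sub_le hx
    (Nat.one_le_iff_ne_zero.1 (mem_Icc.1 hd).1) N).trans ?_
  calc C * ∑ d ∈ Icc 1 D, 1 / (d : ℝ) *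
        (244 * (1 + Real.log N) * ((x / d) ^ ((1 : ℝ) / 3) + √(N ^ 3 / x) * √d))
      = 244 * C * (1 + Real.log N) * (∑ d ∈ Icc 1 D, 1 / (d : ℝ) * (x / d) ^ ((1 : ℝ) / 3)
        + √(N ^ 3 / x) * ∑ d ∈ Icc 1 D, 1 / √(d : ℝ)) := by
        simp only [mul_sum, ← sum_add_distrib, ← Real.sqrt_div_self']
        exact sum_congr rfl fun d _ => by ring
    _ ≤ 244 * C * (1 + Real.log N) * (zetaFourThirds * x ^ ((1 : ℝ) / 3)
        + √(N ^ 3 / x) * (2 * √D)) := by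
        gcongr
        · exact sum_one_div_mul_div_rpow_le hx.le D
        · exact sum_one_div_sqrt_le D

theorem abs_divisorSum_indicator_le (s : Set ℕ) (m : ℕ) :
    |divisorSum (s.indicator a) m| ≤ C * divisorSum (s.indicator 1) m := by
  rw [divisorSum, divisorSum, mul_sum]
  refine (abs_sum_le_sum_abs _ _).trans (sum_le_sum fun d _ => ?_)
  rw [abs_div, Nat.abs_cast, ← mul_div_assoc]
  gcongr
  by_cases hd : d ∈ s <;> simp [hd, ha d]

theorem abs_sum_divisorSum_indicator_Ioi_natFloor_div_le {x : ℝ} (hx : 1 ≤ x) {D N : ℕ}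
    (hD : D ≠ 0) (hN : (N : ℝ) ^ 2 ≤ x) :
    |∑ n ∈ Icc 1 N, divisorSum ((Set.Ioi D).indicator a) ⌊x / n⌋₊|
      ≤ C * (D * (1 + Real.log x) + x / D ^ 2) :=
  calc |∑ n ∈ Icc 1 N, divisorSum ((Set.Ioi D).indicator a) ⌊x / n⌋₊|
      ≤ ∑ n ∈ Icc 1 N, C * divisorSum ((Set.Ioi D).indicator 1) ⌊x / n⌋₊ :=
        (abs_sum_le_sum_abs _ _).trans
          (sum_le_sum fun n _ => abs_divisorSum_indicator_le ha _ _)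
    _ ≤ C * (D * (1 + Real.log x) + x / D ^ 2) := by
        rw [← mul_sum]
        exact mul_le_mul_of_nonneg_left (sum_divisorSum_indicator_Ioi_natFloor_div_le hx hD hN)
          ((abs_nonneg _).trans (ha 0))

theorem abs_sum_divisorSum_natFloor_div_sub_le {x : ℝ} (hx : 1 ≤ x) {D N : ℕ} (hD : D ≠ 0)
    (hN : (N : ℝ) ^ 2 ≤ x) :
    |∑ n ∈ Icc 1 N, divisorSum a ⌊x / n⌋₊ - divisorSumMean a * N|
      ≤ 244 * C * (1 + Real.log N)
          * (zetaFourThirds * x ^ ((1 : ℝ) / 3) + √(N ^ 3 / x) * (2 * √D))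
        + C * (D * (1 + Real.log x) + x / D ^ 2) + C * (N / D) := by
  have hNx : (N : ℝ) ≤ x := le_trans (by exact_mod_cast Nat.le_self_pow two_ne_zero N) hN
  have hmean : |(divisorSumMean a - ∑ d ∈ Icc 1 D, a d / d ^ 2) * N| ≤ C * (N / D) := by
    rw [abs_mul, Nat.abs_cast, mul_div_left_comm, mul_comm (N : ℝ)]
    exact mul_le_mul_of_nonneg_right (abs_divisorSumMean_sub_le ha hD) N.cast_nonneg
  rw [sum_divisorSum_natFloor_div_eq a hNx D]
  refine le_trans (le_of_eq (congrArg _ ?_)) ((abs_sub _ _).trans (add_le_add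
    ((abs_add_le _ _).trans (add_le_add
      (abs_sum_div_mul_sawtooth_sub_le ha (by linarith) D N)
      (abs_sum_divisorSum_indicator_Ioi_natFloor_div_le ha hx hD hN))) hmean))
  ring

theorem abs_sum_divisorSum_natFloor_sub_le_of_le_pow_four {z : ℝ} (hz : 1 ≤ z) {N : ℕ}
    (hN : (N : ℝ) ≤ z ^ 4) :
    |∑ n ∈ Icc 1 N, divisorSum a ⌊z ^ 9 / n⌋₊ - divisorSumMean a * N|
      ≤ C * (244 * zetaFourThirds + 495) * ((1 + Real.log (z ^ 9)) * z ^ 3) := by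
  have hC : 0 ≤ C := (abs_nonneg _).trans (ha 0)
  have hz9 : 1 ≤ z ^ 9 := one_le_pow₀ hz
  have hlog : 0 ≤ Real.log (z ^ 9) := Real.log_nonneg hz9
  have hζ : 0 ≤ zetaFourThirds := zetaFourThirds_nonneg
  have hNsq : (N : ℝ) ^ 2 ≤ z ^ 9 := by
    calc (N : ℝ) ^ 2 ≤ (z ^ 4) ^ 2 := by gcongr
      _ = z ^ 8 := by ring
      _ ≤ z ^ 9 := pow_le_pow_right₀ hz (by norm_num)
  have hlogN : Real.log N ≤ Real.log (z ^ 9) :=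
    log_natCast_le_log hz9 (hN.trans (pow_le_pow_right₀ hz (by norm_num)))
  have hD0 : ⌊z ^ 3⌋₊ ≠ 0 := (Nat.floor_pos.2 (one_le_pow₀ hz)).ne'
  have hDle : (⌊z ^ 3⌋₊ : ℝ) ≤ z ^ 3 := Nat.floor_le (by positivity)
  have hDge : z ^ 3 / 2 ≤ ⌊z ^ 3⌋₊ := half_le_natFloor (one_le_pow₀ hz)
  have hsqrt := sqrt_div_pow_nine_mul_sqrt_floor_le (by linarith) hN
  calc |∑ n ∈ Icc 1 N, divisorSum a ⌊z ^ 9 / n⌋₊ - divisorSumMean a * N|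
      ≤ 244 * C * (1 + Real.log N) * (zetaFourThirds * (z ^ 9) ^ ((1 : ℝ) / 3)
            + √(N ^ 3 / z ^ 9) * (2 * √⌊z ^ 3⌋₊))
          + C * (⌊z ^ 3⌋₊ * (1 + Real.log (z ^ 9)) + z ^ 9 / ⌊z ^ 3⌋₊ ^ 2)
          + C * (N / ⌊z ^ 3⌋₊) := abs_sum_divisorSum_natFloor_div_sub_le ha hz9 hD0 hNsq
    _ ≤ 244 * C * (1 + Real.log (z ^ 9)) * (zetaFourThirds * z ^ 3 + 2 * z ^ 3)
          + C * (z ^ 3 * (1 + Real.log (z ^ 9)) + z ^ 9 / (z ^ 3 / 2) ^ 2)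
          + C * (z ^ 4 / (z ^ 3 / 2)) := by
        rw [pow_nine_rpow_one_third (by linarith)]
        gcongr
    _ = C * (244 * zetaFourThirds + 489) * ((1 + Real.log (z ^ 9)) * z ^ 3)
          + C * (4 * z ^ 3 + 2 * z) := by
        field_simp
        ring
    _ ≤ C * (244 * zetaFourThirds + 495) * ((1 + Real.log (z ^ 9)) * z ^ 3) := by
        have hz3 : z ≤ z ^ 3 := le_self_pow₀ hz three_ne_zero
        have hmul : z ^ 3 ≤ (1 + Real.log (z ^ 9)) * z ^ 3 :=
          le_mul_of_one_le_left (by positivity) (by linarith)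
        nlinarith

theorem abs_sum_divisorSum_mul_sawtooth_sub_le_of_le_pow_five {z : ℝ} (hz : 1 ≤ z) {M : ℕ}
    (hM : (M : ℝ) ≤ z ^ 5) :
    |∑ m ∈ Icc 1 M, divisorSum a m * (sawtooth (z ^ 9 / (m + 1 : ℕ)) - sawtooth (z ^ 9 / m))|
      ≤ 488 * C * zetaFourThirds * ((1 + Real.log (z ^ 9)) * z ^ 3) := by
  have hC : 0 ≤ C := (abs_nonneg _).trans (ha 0)
  have hz9 : 1 ≤ z ^ 9 := one_le_pow₀ hz
  have hζ : 0 ≤ zetaFourThirds := zetaFourThirds_nonneg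
  have hlogM : Real.log M ≤ Real.log (z ^ 9) :=
    log_natCast_le_log hz9 (hM.trans (pow_le_pow_right₀ hz (by norm_num)))
  have hsqrt : √(M ^ 3 / z ^ 9) ≤ z ^ 3 := by
    rw [Real.sqrt_le_left (by positivity), div_le_iff₀ (by positivity)]
    calc (M : ℝ) ^ 3 ≤ (z ^ 5) ^ 3 := by gcongr
      _ = (z ^ 3) ^ 2 * z ^ 9 := by ring
  calc |∑ m ∈ Icc 1 M, divisorSum a m * (sawtooth (z ^ 9 / (m + 1 : ℕ)) - sawtooth (z ^ 9 / m))|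
      ≤ 244 * C * zetaFourThirds * (1 + Real.log M)
          * ((z ^ 9) ^ ((1 : ℝ) / 3) + √(M ^ 3 / z ^ 9)) :=
        abs_sum_divisorSum_mul_sawtooth_sub_le ha (by linarith) M
    _ ≤ 244 * C * zetaFourThirds * (1 + Real.log (z ^ 9)) * (z ^ 3 + z ^ 3) := by
        rw [pow_nine_rpow_one_third (by linarith)]
        have hlog := Real.log_nonneg hz9
        gcongr
    _ = 488 * C * zetaFourThirds * ((1 + Real.log (z ^ 9)) * z ^ 3) := by ring

theorem abs_pow_nine_mul_tsum_divisorSum_sub_le {z : ℝ} (hz : 1 ≤ z) {M : ℕ}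
    (hM : z ^ 4 / 2 ≤ M) :
    |z ^ 9 * (∑' m : ℕ, divisorSum a m / (m * (m + 1))
        - ∑ m ∈ Icc 1 M, divisorSum a m / (m * (m + 1)) - divisorSumMean a / (M + 1))|
      ≤ 24 * C * z ^ 3 := by
  have hC : 0 ≤ C := (abs_nonneg _).trans (ha 0)
  have hz4 : 0 < z ^ 4 := by positivity
  have hM0 : M ≠ 0 := (Nat.cast_pos.1 (show (0 : ℝ) < M by linarith)).ne'
  have hsqrt : z ^ 2 / 2 ≤ √M :=
    Real.le_sqrt_of_sq_le (by linarith [show (z ^ 2 / 2) ^ 2 = z ^ 4 / 4 by ring])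
  rw [abs_mul, abs_of_pos (by positivity)]
  calc z ^ 9 * |∑' m : ℕ, divisorSum a m / (m * (m + 1))
          - ∑ m ∈ Icc 1 M, divisorSum a m / (m * (m + 1)) - divisorSumMean a / (M + 1)|
      ≤ z ^ 9 * (6 * C / (M * √M)) := by
        gcongr
        exact abs_tsum_divisorSum_sub_le ha hM0
    _ ≤ z ^ 9 * (6 * C / (z ^ 4 / 2 * (z ^ 2 / 2))) := by gcongr
    _ = 24 * C * z ^ 3 := by
        field_simp
        ring

theorem abs_divisorSumMean_mul_floor_sub_le {t : ℝ} (ht : 0 ≤ t) :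
    |divisorSumMean a * (⌊t⌋₊ - t)| ≤ 2 * C := by
  have hfloor : |(⌊t⌋₊ : ℝ) - t| ≤ 1 := by
    rw [abs_le]
    constructor <;> linarith [Nat.floor_le ht, Nat.lt_floor_add_one t]
  rw [abs_mul]
  exact (mul_le_of_le_one_right (abs_nonneg _) hfloor).trans (abs_divisorSumMean_le ha)

theorem abs_sum_divisorSum_natFloor_pow_nine_sub_le {z : ℝ} (hz : 1 ≤ z) :
    |∑ n ∈ Icc 1 ⌊z ^ 9⌋₊, divisorSum a ⌊z ^ 9 / n⌋₊
        - z ^ 9 * ∑' m : ℕ, divisorSum a m / (m * (m + 1))|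
      ≤ C * (732 * zetaFourThirds + 521) * ((1 + Real.log (z ^ 9)) * z ^ 3) := by
  have hC : 0 ≤ C := (abs_nonneg _).trans (ha 0)
  have hz3 : 1 ≤ z ^ 3 := one_le_pow₀ hz
  obtain ⟨M, hMle, hMlt, hMge⟩ : ∃ M : ℕ, (M : ℝ) ≤ z ^ 5 ∧ z ^ 5 < (M + 1 : ℕ) ∧ z ^ 5 / 2 ≤ M :=
    ⟨⌊z ^ 5⌋₊, Nat.floor_le (by positivity),
      (Nat.lt_floor_add_one _).trans_eq (Nat.cast_succ _).symm, half_le_natFloor (one_le_pow₀ hz)⟩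
  have hN : (⌊z ^ 9 / (M + 1 : ℕ)⌋₊ : ℝ) ≤ z ^ 4 := by
    refine (Nat.floor_le (by positivity)).trans ?_
    rw [div_le_iff₀ (by positivity)]
    calc z ^ 9 = z ^ 4 * z ^ 5 := by ring
      _ ≤ z ^ 4 * (M + 1 : ℕ) := by gcongr
  have hM : z ^ 4 / 2 ≤ M := by linarith [pow_le_pow_right₀ hz (show 4 ≤ 5 by norm_num)]
  have hinitial := abs_sum_divisorSum_natFloor_sub_le_of_le_pow_four ha hz hN
  have hsawtooth := abs_sum_divisorSum_mul_sawtooth_sub_le_of_le_pow_five ha hz hMle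
  have htail := abs_pow_nine_mul_tsum_divisorSum_sub_le ha hz hM
  have hround := abs_divisorSumMean_mul_floor_sub_le ha
    (by positivity : 0 ≤ z ^ 9 / (M + 1 : ℕ))
  have hmul : z ^ 3 ≤ (1 + Real.log (z ^ 9)) * z ^ 3 :=
    le_mul_of_one_le_left (by positivity) (by linarith [Real.log_nonneg (one_le_pow₀ (n := 9) hz)])
  rw [sum_natFloor_div_sub_mul_eq (divisorSum a) (divisorSumMean a) _ (by positivity) M]
  refine ((abs_add_le _ _).trans (add_le_add ((abs_sub _ _).trans (add_le_add
    ((abs_add_le _ _).trans (add_le_add hinitial hsawtooth)) htail)) hround)).trans ?_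
  nlinarith

theorem sum_altSigma_ratio_floor_div_general :
    (fun x : ℝ => ∑ n ∈ Icc 1 ⌊x⌋₊, divisorSum a ⌊x / n⌋₊
        - x * ∑' m : ℕ, divisorSum a m / (m * (m + 1)))
      =O[atTop] fun x : ℝ => x ^ ((1 : ℝ) / 3) * Real.log x := by
  have hC : 0 ≤ C := (abs_nonneg _).trans (ha 0)
  have hζ : 0 ≤ zetaFourThirds := zetaFourThirds_nonneg
  refine Asymptotics.IsBigO.of_bound (2 * (C * (732 * zetaFourThirds + 521))) ?_
  filter_upwards [eventually_ge_atTop (Real.exp 1)] with x hx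
  have hx0 : 0 < x := (Real.exp_pos 1).trans_le hx
  have hlog : 1 ≤ Real.log x := (Real.le_log_iff_exp_le hx0).2 hx
  obtain ⟨z, hz, rfl⟩ : ∃ z : ℝ, 1 ≤ z ∧ z ^ 9 = x :=
    ⟨x ^ ((9 : ℕ) : ℝ)⁻¹, Real.one_le_rpow ((Real.one_le_exp zero_le_one).trans hx) (by positivity),
      Real.rpow_inv_natCast_pow hx0.le (by norm_num)⟩
  rw [Real.norm_eq_abs, pow_nine_rpow_one_third (by linarith),
    Real.norm_of_nonneg (by positivity)]
  refine (abs_sum_divisorSum_natFloor_pow_nine_sub_le ha hz).trans ?_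
  calc C * (732 * zetaFourThirds + 521) * ((1 + Real.log (z ^ 9)) * z ^ 3)
      ≤ C * (732 * zetaFourThirds + 521) * ((2 * Real.log (z ^ 9)) * z ^ 3) := by
        gcongr
        linarith
    _ = 2 * (C * (732 * zetaFourThirds + 521)) * (z ^ 3 * Real.log (z ^ 9)) := by ring

end BoundedCoefficients

theorem altSigma_div_eq_divisorSum (n : ℕ) :
    altSigma n / n = divisorSum (fun d => (-1) ^ ArithmeticFunction.cardFactors d) n := by
  rw [altSigma, divisorSum, sum_div, ← Nat.sum_div_divisors]
  refine sum_congr rfl fun d hd => ?_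
  obtain ⟨hdn, hn⟩ := Nat.mem_divisors.1 hd
  have hn0 : (n : ℝ) ≠ 0 := Nat.cast_ne_zero.2 hn
  have hd0 : (d : ℝ) ≠ 0 := Nat.cast_ne_zero.2 (ne_zero_of_dvd_ne_zero hn hdn)
  rw [Nat.cast_div hdn hd0, Nat.div_div_self hdn hn]
  field_simp

/-- `∑_{n ≤ x} β(⌊x/n⌋)/⌊x/n⌋ = x ∑_{m ≥ 1} β(m)/(m²(m+1)) + O(x^{1/3} log x)`. -/
theorem sum_altSigma_ratio_floor_div :
    (fun x : ℝ =>
        (∑ n ∈ Finset.Icc 1 ⌊x⌋₊,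
          altSigma ⌊x / (n : ℝ)⌋₊ / (⌊x / (n : ℝ)⌋₊ : ℝ)) -
        x * ∑' m : ℕ, altSigma m / (m ^ 2 * (m + 1)))
    =O[atTop] fun x : ℝ => x ^ ((1 : ℝ) / 3) * Real.log x := by
  have hterm : ∀ m : ℕ, altSigma m / ((m : ℝ) ^ 2 * (m + 1))
      = altSigma m / m / (m * (m + 1)) := fun m => by rw [div_div, sq, mul_assoc]
  simp only [hterm, altSigma_div_eq_divisorSum]
  exact sum_altSigma_ratio_floor_div_general (C := 1) fun d => by
    rw [abs_neg_one_pow]
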